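/- arXiv:1502.01149 — 7 statements merged into one kernel-verified Lean document; each statement's English description precedes it below -/
import Mathlib

section
/- Let n ≥ 4 and let φ : ℝⁿ → ℝⁿ be a continuous coherency preserver for the form q(x₁,…,xₙ) = xₙ² − (x₁² + ⋯ + x_{n−1}²). Then either φ preserves adjacency (for all a, b ∈ ℝⁿ with q(a−b) = 0 and a ≠ b, one has q(φ(a)−φ(b)) = 0 and φ(a) ≠ φ(b)), or φ is degenerate (its range is contained in 𝒞(s′) for some s′ ∈ ℝⁿ). -/
/-!
Two distinct coherent points span a null line, and every set of pairwise coherent points lies on a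
null line (`IsLorentzian.coh_of_coh`). Suppose that `φ` identifies two adjacent points `a`, `b`.
There are two cases.

*`φ` is constant on no segment of a null line.* Points `x` of the cone of `a` and `y` of the cone of
`b` that are coherent with each other have images coherent with each other and with
`p = φ a = φ b`, so these images lie on one null line through `p`. Since `φ ≠ p` on a dense subset of
each generator, any two points of the cone of `a` can be linked through a point of the cone of `b`,
so the whole cone of `a` is mapped into a single null line. Any further point is coherent with enough
points of this cone to be mapped to that line too, so `φ` is degenerate (`degenerate_of_nonconst`).

*`φ` has a constant value `c` on an open piece `I` of a null line `ℓ`.* If a point `x` in general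
position has image not coherent with `c`, a connectedness argument shows that all points adjacent to
`x` and coherent with a point of `I` have the same image, namely the image `h` of the point of `ℓ`
coherent with `x` (`value_of_adjacent`), and that `φ = h` on a piece of `ℓ`. The same
applied to a further point whose image is not coherent with `h` leads to a contradiction, so the range
of `φ` lies in the cone of `c` or in the cone of `h` (`degenerate_of_const`).

The argument only uses the properties collected in `IsLorentzian`, which are verified for the
Minkowski form at the end.
-/

/-- The standard Minkowski quadratic form
`q(x₁,…,xₙ) = xₙ² − (x₁² + ⋯ + x_{n−1}²)` on `ℝⁿ`. -/
noncomputable def mq (n : ℕ) (x : Fin n → ℝ) : ℝ :=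
  ∑ i : Fin n, (if (i : ℕ) = n - 1 then (1 : ℝ) else -1) * x i ^ 2

open Filter Topology Set

section Abstract

variable {V : Type*} [NormedAddCommGroup V] [NormedSpace ℝ V]

/-- The properties of the Minkowski form that the argument uses, for a symmetric bilinear form `B`
whose quadratic form is `x ↦ B x x`: orthogonal null vectors are parallel, every vector is a sum of
two null vectors (one of them small if the given vector is small, as measured by `N`), and the null
vectors that are not orthogonal to a given nonzero null vector `d` are dense among null vectors. -/
structure IsLorentzian (B : V →ₗ[ℝ] V →ₗ[ℝ] ℝ) : Prop where
  symm : ∀ x y, B x y = B y x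
  cont : Continuous fun z : V × V => B z.1 z.2
  parallel : ∀ u v, B u u = 0 → B v v = 0 → B u v = 0 → v ≠ 0 → ∃ c : ℝ, u = c • v
  split : ∃ N : V → ℝ, Continuous N ∧ N 0 = 0 ∧
    ∀ v, ∃ w, B w w = 0 ∧ B (v - w) (v - w) = 0 ∧ ‖w‖ ≤ N v
  dense : ∀ d u, B d d = 0 → d ≠ 0 → B u u = 0 → u ∈ closure {v | B v v = 0 ∧ B v d ≠ 0}

/-- Coherency: the difference of `x` and `y` is a null vector. -/
def Coh (B : V →ₗ[ℝ] V →ₗ[ℝ] ℝ) (x y : V) : Prop := B (x - y) (x - y) = 0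

variable {B : V →ₗ[ℝ] V →ₗ[ℝ] ℝ}

lemma Coh.symm {x y : V} (h : Coh B x y) : Coh B y x := by
  unfold Coh at *
  rw [← neg_sub x y]; simpa only [map_neg, LinearMap.neg_apply, neg_neg] using h

lemma coh_refl (x : V) : Coh B x x := by simp [Coh]

namespace IsLorentzian

lemma cont₂ (hB : IsLorentzian B) {X : Type*} [TopologicalSpace X] {f g : X → V}
    (hf : Continuous f) (hg : Continuous g) : Continuous fun x => B (f x) (g x) :=
  hB.cont.comp (hf.prodMk hg)

/-- Cliques are contained in null lines: two points that are both coherent with two distinct coherent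
points `p`, `m` lie on the null line through `p` and `m`, hence are coherent. -/
lemma coh_of_coh (hB : IsLorentzian B) {p m x y : V} (hpm : Coh B p m) (hne : p ≠ m)
    (hxp : Coh B x p) (hxm : Coh B x m) (hyp : Coh B y p) (hym : Coh B y m) : Coh B x y := by
  have key : ∀ z, Coh B z p → Coh B z m → ∃ c : ℝ, z - p = c • (m - p) := by
    intro z hzp hzm
    have hmp : B (m - p) (m - p) = 0 := hpm.symm
    refine hB.parallel _ _ hzp hmp ?_ (sub_ne_zero.2 hne.symm)
    have h3 : B ((z - p) - (m - p)) ((z - p) - (m - p)) = 0 := by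
      rw [sub_sub_sub_cancel_right]; exact hzm
    have h1 : B (z - p) (z - p) = 0 := hzp
    have hs := hB.symm (m - p) (z - p)
    generalize z - p = a at *
    generalize m - p = b at *
    simp only [map_sub, LinearMap.sub_apply] at h3
    linarith
  obtain ⟨a, ha⟩ := key x hxp hxm
  obtain ⟨b, hb⟩ := key y hyp hym
  have hmp : B (m - p) (m - p) = 0 := hpm.symm
  have : x - y = (a - b) • (m - p) := by
    rw [sub_smul, ← ha, ← hb]; abel
  unfold Coh
  rw [this]; simp only [map_smul, LinearMap.smul_apply, hmp, smul_zero]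

lemma eq_of_coh (hB : IsLorentzian B) {c k x y : V} (hck : ¬ Coh B k c)
    (hxc : Coh B x c) (hxk : Coh B x k) (hyc : Coh B y c) (hyk : Coh B y k)
    (hxy : Coh B x y) : x = y := by
  by_contra hne
  exact hck (hB.coh_of_coh hxy hne hxk.symm hyk.symm hxc.symm hyc.symm)

lemma coh_line_self (_hB : IsLorentzian B) {a u : V} (hu : B u u = 0) (s t : ℝ) :
    Coh B (a + s • u) (a + t • u) := by
  have : a + s • u - (a + t • u) = (s - t) • u := by module
  unfold Coh
  rw [this]; simp [hu]

lemma coh_smul (hB : IsLorentzian B) {u : V} (hu : B u u = 0) (s t : ℝ) :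
    Coh B (s • u) (t • u) := by
  simpa using hB.coh_line_self (a := 0) hu s t

/-- A point `z` with `B z d ≠ 0` is coherent with exactly one point `t • d` of the null line `ℝ d`,
called the foot of `z` below; it is given by `t = B z z / (2 * B z d)`. -/
lemma coh_iff (hB : IsLorentzian B) {d z : V} (hd : B d d = 0) (t : ℝ) :
    Coh B z (t • d) ↔ B z z = 2 * t * B z d := by
  unfold Coh
  simp only [map_sub, map_smul, LinearMap.sub_apply, LinearMap.smul_apply, smul_eq_mul, hd,
    hB.symm d z]
  constructor <;> intro h <;> linarith

lemma coh_foot (hB : IsLorentzian B) {d z : V} (hd : B d d = 0) (hz : B z d ≠ 0) :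
    Coh B z ((B z z / (2 * B z d)) • d) := by
  rw [hB.coh_iff hd]; field_simp

lemma foot_eq (hB : IsLorentzian B) {d z : V} (hd : B d d = 0) (hz : B z d ≠ 0) {t : ℝ}
    (h : Coh B z (t • d)) : B z z / (2 * B z d) = t := by
  rw [hB.coh_iff hd] at h
  rw [h]; field_simp

/-! ### Maps that are constant on a segment of a null line -/

section Const

variable {φ : V → V} {d c : V} {I : Set ℝ}

/-- If `φ = c` on the open part `I • d` of a null line, then `φ` maps points with foot in `I` into
the cone of `c`. Away from `c`, the generator of that cone containing `φ z` is locally constant,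
because nearby points are joined by two short null segments. -/
lemma eventually_coh
    (hB : IsLorentzian B) (hφ : Continuous φ)
    (hp : ∀ x y, Coh B x y → Coh B (φ x) (φ y)) (hd : B d d = 0) (hI : IsOpen I)
    (hc : ∀ t ∈ I, φ (t • d) = c)
    {z₀ : V} {t₀ : ℝ} (hz : B z₀ d ≠ 0) (ht : t₀ ∈ I)
    (h₀ : Coh B z₀ (t₀ • d)) (hne : φ z₀ ≠ c) : ∀ᶠ z in 𝓝 z₀, Coh B (φ z) (φ z₀) := by
  have hO : ∀ᶠ z in 𝓝 z₀, Coh B (φ z) c ∧ φ z ≠ c := by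
    have e1 : ∀ᶠ z in 𝓝 z₀, B z d ≠ 0 :=
      (hB.cont₂ continuous_id continuous_const).continuousAt.eventually_ne hz
    have hcont : ContinuousAt (fun z => B z z / (2 * B z d)) z₀ :=
      (hB.cont₂ continuous_id continuous_id).continuousAt.div
        (continuous_const.mul (hB.cont₂ continuous_id continuous_const)).continuousAt
        (by simpa using hz)
    have e2 : ∀ᶠ z in 𝓝 z₀, B z z / (2 * B z d) ∈ I :=
      hcont.eventually_mem (hI.mem_nhds (by rwa [hB.foot_eq hd hz h₀]))
    have e3 : ∀ᶠ z in 𝓝 z₀, φ z ≠ c := hφ.continuousAt.eventually_ne hne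
    filter_upwards [e1, e2, e3] with z h1 h2 h3
    refine ⟨?_, h3⟩
    rw [← hc _ h2]
    exact hp _ _ (hB.coh_foot hd h1)
  obtain ⟨N, hN, hN0, hsp⟩ := hB.split
  obtain ⟨ε, hε, hball⟩ := Metric.eventually_nhds_iff.1 hO
  have e4 : ∀ᶠ z in 𝓝 z₀, N (z - z₀) < ε := by
    have : Continuous fun z => N (z - z₀) := hN.comp (continuous_id.sub continuous_const)
    refine this.continuousAt.eventually_lt continuousAt_const ?_
    simpa [hN0] using hε
  filter_upwards [hO, e4] with z hz hNz
  obtain ⟨w, hw, hvw, hwN⟩ := hsp (z - z₀)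
  have h1 := hball (y := z₀ + w) (by simpa using lt_of_le_of_lt hwN hNz)
  have h0 := hO.self_of_nhds
  have hc0 : Coh B (z₀ + w) z₀ := by simpa [Coh] using hw
  have hc1 : Coh B z (z₀ + w) := by
    unfold Coh; rw [← sub_sub]; exact hvw
  exact hB.coh_of_coh h1.1 h1.2 (hp _ _ hc1) hz.1 (hp _ _ hc0.symm) h0.1

/-- The case of `value_of_adjacent` in which `y - x` is not parallel to `d`.

The null directions `w l = (1 - l) u₀ + l u - l (1 - l) κ d` interpolate between the direction `u₀`
from the foot of `x` to `x` and the direction `u` from `x` to `y`. The line `x + ℝ (w l)` meets the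
cone of `t • d` at `Y l t`, unless the denominator `D l t` vanishes. As `φ x` is not coherent with
`c`, the value `φ (Y l t)` does not depend on `t ∈ I`, and by `eventually_coh` it is locally
constant in `l > 0`. At `l = 1`, `t = ty` this point is `y`; as `l → 0` it tends to `tx • d`. -/
lemma value_of_transversal
    (hB : IsLorentzian B) (hφ : Continuous φ)
    (hp : ∀ x y, Coh B x y → Coh B (φ x) (φ y)) (hd : B d d = 0) (hI : IsOpen I)
    (hc : ∀ t ∈ I, φ (t • d) = c)
    {x y : V} {tx ty : ℝ} (hx : B x d ≠ 0) (hxt : Coh B x (tx • d))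
    (hxc : ¬ Coh B (φ x) c) (hy : B y d ≠ 0) (hty : ty ∈ I) (hyt : Coh B y (ty • d))
    (hxy : Coh B y x) (htr : B (y - x) d ≠ 0) : φ y = φ (tx • d) := by
  have htxI : ∀ t ∈ I, tx - t ≠ 0 := by
    intro t ht h
    obtain rfl : tx = t := by linarith
    exact hxc (hc _ ht ▸ hp _ _ hxt)
  set r := B x d with hr
  set β := B (y - x) d with hβ
  obtain ⟨u, hu⟩ : ∃ u, u = β⁻¹ • (y - x) := ⟨_, rfl⟩
  obtain ⟨u₀, hu₀⟩ : ∃ u₀, u₀ = r⁻¹ • (x - tx • d) := ⟨_, rfl⟩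
  have hyu : y = x + β • u := by rw [hu, smul_inv_smul₀ htr]; abel
  have hxu : x = tx • d + r • u₀ := by rw [hu₀, smul_inv_smul₀ hx]; abel
  have huu : B u u = 0 := by
    have : B (y - x) (y - x) = 0 := hxy
    rw [hu]; simp only [map_smul, LinearMap.smul_apply, this, smul_zero]
  have huu₀ : B u₀ u₀ = 0 := by
    have : B (x - tx • d) (x - tx • d) = 0 := hxt
    rw [hu₀]; simp only [map_smul, LinearMap.smul_apply, this, smul_zero]
  have hud : B u d = 1 := by
    rw [hu]; simp only [map_smul, LinearMap.smul_apply, ← hβ, smul_eq_mul]; field_simp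
  have hud₀ : B u₀ d = 1 := by
    rw [hu₀]
    simp only [map_smul, LinearMap.smul_apply, map_sub, LinearMap.sub_apply, ← hr, smul_eq_mul, hd]
    field_simp; ring
  have hdu : B d u = 1 := by rw [hB.symm, hud]
  have hdu₀ : B d u₀ = 1 := by rw [hB.symm, hud₀]
  set κ := B u u₀ with hκ
  have hκ' : B u₀ u = κ := hB.symm _ _
  obtain ⟨w, hw⟩ : ∃ w : ℝ → V,
    w = fun l => (1 - l) • u₀ + l • u - (l * (1 - l) * κ) • d := ⟨_, rfl⟩
  obtain ⟨D, hD⟩ : ∃ D : ℝ → ℝ → ℝ, D = fun l t => (tx - t) + r * l ^ 2 * κ := ⟨_, rfl⟩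
  obtain ⟨Y, hY⟩ : ∃ Y : ℝ → ℝ → V, Y = fun l t => x + (-r * (tx - t) / D l t) • w l := ⟨_, rfl⟩
  have hwn : ∀ l, B (w l) (w l) = 0 := by
    intro l
    rw [hw]
    simp only [map_smul, LinearMap.smul_apply, map_sub, LinearMap.sub_apply, map_add,
      LinearMap.add_apply, smul_eq_mul, hd, huu, huu₀, hud, hud₀, hdu, hdu₀, ← hκ, hκ']
    ring
  have hwd : ∀ l, B (w l) d = 1 := by
    intro l
    rw [hw]
    simp only [map_smul, LinearMap.smul_apply, map_sub, LinearMap.sub_apply, map_add,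
      LinearMap.add_apply, smul_eq_mul, hd, hud, hud₀]
    ring
  have hxw : ∀ l, B x (w l) = tx + r * l ^ 2 * κ := by
    intro l
    rw [hw, hxu]
    simp only [map_smul, LinearMap.smul_apply, map_sub, map_add,
      LinearMap.add_apply, smul_eq_mul, hd, huu₀, hud₀, hdu, hdu₀, hκ']
    ring
  have hxx : B x x = 2 * tx * r := (hB.coh_iff hd _).1 hxt
  have hYx : ∀ l t, Coh B (Y l t) x := by
    intro l t
    have : Y l t - x = (-r * (tx - t) / D l t) • w l := by rw [hY]; simp
    unfold Coh; rw [this]; simp only [map_smul, LinearMap.smul_apply, hwn, smul_zero]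
  have hYY : ∀ l s t, Coh B (Y l s) (Y l t) := by
    intro l s t
    rw [hY]; exact hB.coh_line_self (hwn l) _ _
  have hYB : ∀ l t, D l t ≠ 0 → B (Y l t) d = r ^ 2 * l ^ 2 * κ / D l t := by
    intro l t h
    have : B (Y l t) d = r + (-r * (tx - t) / D l t) := by
      rw [hY]; simp only [map_add, map_smul, LinearMap.add_apply, LinearMap.smul_apply, hwd, ← hr,
        smul_eq_mul, mul_one]
    rw [this]; field_simp; rw [hD]; ring
  have hYt : ∀ l t, D l t ≠ 0 → Coh B (Y l t) (t • d) := by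
    intro l t h
    rw [hB.coh_iff hd, hYB l t h]
    have : B (Y l t) (Y l t) = 2 * tx * r + 2 * (-r * (tx - t) / D l t) * (tx + r * l ^ 2 * κ) := by
      rw [hY]; simp only [map_add, map_smul, LinearMap.add_apply, LinearMap.smul_apply, hwn, hxx,
        hxw, hB.symm (w l) x, smul_eq_mul]
      ring
    rw [this]; field_simp; rw [hD]; ring
  have hYc : ∀ l t, t ∈ I → D l t ≠ 0 → Coh B (φ (Y l t)) c := by
    intro l t ht h
    rw [← hc t ht]; exact hp _ _ (hYt l t h)
  have hwell : ∀ l s t, s ∈ I → t ∈ I → D l s ≠ 0 → D l t ≠ 0 → φ (Y l s) = φ (Y l t) := by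
    intro l s t hs ht h1 h2
    exact hB.eq_of_coh hxc (hYc _ _ hs h1) (hp _ _ (hYx _ _)) (hYc _ _ ht h2)
      (hp _ _ (hYx _ _)) (hp _ _ (hYY _ _ _))
  -- `y` belongs to the family: `Y 1 ty = y`.
  have hyy : B y y = 2 * ty * B y d := (hB.coh_iff hd _).1 hyt
  have hrel : r * (tx - ty) + β * D 1 ty = 0 := by
    have hxu' : B x u = tx + r * κ := by
      rw [hxu]; simp only [map_smul, LinearMap.smul_apply, map_add, LinearMap.add_apply,
        smul_eq_mul, hdu, hκ']; ring
    rw [hyu] at hyy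
    simp only [map_smul, LinearMap.smul_apply, map_add, LinearMap.add_apply,
        smul_eq_mul, hud, huu, hxx, hB.symm u x, hxu', ← hr] at hyy
    rw [hD]; simp only []
    linear_combination hyy / 2
  have hD1 : D 1 ty ≠ 0 := by
    intro h
    rw [h] at hrel
    exact mul_ne_zero hx (htxI _ hty) (by linarith)
  have hy1 : Y 1 ty = y := by
    have hs : -r * (tx - ty) / D 1 ty = β := by field_simp; linarith
    have hw1 : w 1 = u := by rw [hw]; simp
    rw [hY]; simp only []; rw [hs, hw1, ← hyu]
  have hκ0 : κ ≠ 0 := by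
    intro h
    apply hy
    rw [← hy1, hYB _ _ hD1, h]; simp
  have hDc : ∀ t, Continuous fun l => D l t := by
    intro t; rw [hD]; fun_prop
  have hYc' : ∀ t l, D l t ≠ 0 → ContinuousAt (fun l => Y l t) l := by
    intro t l h
    have hwc : Continuous w := by rw [hw]; fun_prop
    rw [hY]
    exact continuousAt_const.add
      ((continuousAt_const.div (hDc t).continuousAt h).smul hwc.continuousAt)
  have hpick : ∀ l, ∃ t ∈ I, D l t ≠ 0 := by
    intro l
    by_contra! hall
    have e : ∀ᶠ t in 𝓝[≠] ty, t ∈ I := mem_nhdsWithin_of_mem_nhds (hI.mem_nhds hty)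
    obtain ⟨t, htI, htne⟩ := (e.and self_mem_nhdsWithin).exists
    have h1 := hall t htI
    have h2 := hall ty hty
    rw [hD] at h1 h2
    exact htne (by simp only [] at h1 h2; simp; linarith)
  have hconst : ∀ l > 0, ∀ t ∈ I, D l t ≠ 0 → φ (Y l t) = φ y := by
    intro l hl t ht hDt
    have := isPreconnected_Ioi.induction₂ (s := Ioi (0 : ℝ))
      (fun l m => ∀ s ∈ I, ∀ t ∈ I, D l s ≠ 0 → D m t ≠ 0 → φ (Y l s) = φ (Y m t))
      ?_ ?_ ?_ (show l ∈ Ioi 0 from hl) (show (1 : ℝ) ∈ Ioi 0 from Set.mem_Ioi.2 one_pos) t ht ty hty hDt hD1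
    · rwa [hy1] at this
    · intro l hl
      obtain ⟨t₀, ht₀, hD₀⟩ := hpick l
      have hne : φ (Y l t₀) ≠ c := by
        intro h
        exact hxc (h ▸ (hp _ _ (hYx l t₀)).symm)
      have hBne : B (Y l t₀) d ≠ 0 := by
        rw [hYB _ _ hD₀]
        have : l ≠ 0 := ne_of_gt hl
        positivity
      have e1 := (hYc' t₀ l hD₀).eventually
        (hB.eventually_coh hφ hp hd hI hc hBne ht₀ (hYt _ _ hD₀) hne)
      have e2 : ∀ᶠ m in 𝓝 l, D m t₀ ≠ 0 := (hDc t₀).continuousAt.eventually_ne hD₀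
      refine mem_nhdsWithin_of_mem_nhds ?_
      filter_upwards [e1, e2] with m h1 h2 s hs t ht hDs hDt
      rw [hwell l s t₀ hs ht₀ hDs hD₀, hwell m t t₀ ht ht₀ hDt h2]
      exact hB.eq_of_coh hxc (hYc _ _ ht₀ hD₀) (hp _ _ (hYx _ _)) (hYc _ _ ht₀ h2)
        (hp _ _ (hYx _ _)) h1.symm
    · intro l m k _ _ _ h1 h2 s hs t ht hDs hDt
      obtain ⟨t₀, ht₀, hD₀⟩ := hpick m
      rw [h1 s hs t₀ ht₀ hDs hD₀, h2 t₀ ht₀ t ht hD₀ hDt]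
    · intro l m _ _ h s hs t ht hDs hDt
      exact (h t ht s hs hDt hDs).symm
  have hD0 : D 0 ty ≠ 0 := by rw [hD]; simpa using htxI _ hty
  have hY0 : Y 0 ty = tx • d := by
    have hs : -r * (tx - ty) / D 0 ty = -r := by
      have := htxI _ hty
      rw [hD]; simp only [ne_eq, OfNat.ofNat_ne_zero, not_false_eq_true, zero_pow, mul_zero,
        zero_mul, add_zero]
      field_simp
    have hw0 : w 0 = u₀ := by rw [hw]; simp
    rw [hY]; simp only []; rw [hs, hw0, hxu]; module
  have hlim : Tendsto (fun l => φ (Y l ty)) (𝓝[>] 0) (𝓝 (φ (tx • d))) := by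
    rw [← hY0]
    exact (hφ.continuousAt.comp (f := fun l => Y l ty) (hYc' ty 0 hD0)).tendsto.mono_left
      nhdsWithin_le_nhds
  have hlim' : Tendsto (fun l => φ (Y l ty)) (𝓝[>] 0) (𝓝 (φ y)) := by
    refine tendsto_const_nhds.congr' ?_
    have e2 : ∀ᶠ m in 𝓝 (0 : ℝ), D m ty ≠ 0 := (hDc ty).continuousAt.eventually_ne hD0
    filter_upwards [mem_nhdsWithin_of_mem_nhds e2, self_mem_nhdsWithin] with l h1 h2
    exact (hconst l h2 ty hty h1).symm
  exact tendsto_nhds_unique hlim' hlim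

/-- Let `φ = c` on the open part `I • d` of a null line, and let `x` be a point with foot `tx • d` and
`φ x` not coherent with `c`. Then every point adjacent to `x` with foot in `I` has the same image as
the foot of `x`. -/
lemma value_of_adjacent
    (hB : IsLorentzian B) (hφ : Continuous φ)
    (hp : ∀ x y, Coh B x y → Coh B (φ x) (φ y)) (hd : B d d = 0) (hd0 : d ≠ 0) (hI : IsOpen I)
    (hc : ∀ t ∈ I, φ (t • d) = c)
    {x y : V} {tx ty : ℝ} (hx : B x d ≠ 0) (hxt : Coh B x (tx • d))
    (hxc : ¬ Coh B (φ x) c) (hy : B y d ≠ 0) (hty : ty ∈ I) (hyt : Coh B y (ty • d))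
    (hxy : Coh B y x) : φ y = φ (tx • d) := by
  have hcl := mem_closure_iff_frequently.1 (hB.dense d (y - x) hd hd0 hxy)
  have hxc' : Continuous fun v => x + v := continuous_const.add continuous_id
  have e1 : ∀ᶠ v in 𝓝 (y - x), B (x + v) d ≠ 0 :=
    (hB.cont₂ hxc' continuous_const).continuousAt.eventually_ne (by simpa using hy)
  have hcont : ContinuousAt (fun v => B (x + v) (x + v) / (2 * B (x + v) d)) (y - x) :=
    (hB.cont₂ hxc' hxc').continuousAt.div
      (continuous_const.mul (hB.cont₂ hxc' continuous_const)).continuousAt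
      (by simpa using hy)
  have e2 : ∀ᶠ v in 𝓝 (y - x), B (x + v) (x + v) / (2 * B (x + v) d) ∈ I := by
    refine hcont.eventually_mem (hI.mem_nhds ?_)
    rw [add_sub_cancel]
    rwa [hB.foot_eq hd hy hyt]
  have hfr : ∃ᶠ v in 𝓝 (y - x), v ∈ {v | φ (x + v) = φ (tx • d)} := by
    refine (hcl.and_eventually (e1.and e2)).mono ?_
    rintro v ⟨⟨hv, hvd⟩, h1, h2⟩
    exact hB.value_of_transversal hφ hp hd hI hc hx hxt hxc h1 h2 (hB.coh_foot hd h1)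
      (by simpa [Coh] using hv) (by simpa using hvd)
  have hclosed : IsClosed {v | φ (x + v) = φ (tx • d)} :=
    isClosed_eq (hφ.comp hxc') continuous_const
  have := hclosed.closure_subset (mem_closure_iff_frequently.2 hfr)
  simpa using this

/-- In the situation of `value_of_adjacent`, `φ` is also constant on the null line near the foot of
`x`: the points `x + (t - tx) • d`, whose feet are `t • d`, are all coherent with the one point of
the line `x + ℝ d` whose foot is `t₀ • d`, for a fixed `t₀ ∈ I`. -/
lemma eventually_const
    (hB : IsLorentzian B) (hφ : Continuous φ)
    (hp : ∀ x y, Coh B x y → Coh B (φ x) (φ y)) (hd : B d d = 0) (hd0 : d ≠ 0) (hI : IsOpen I)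
    (hc : ∀ t ∈ I, φ (t • d) = c)
    (hne : I.Nonempty) {x : V} {tx : ℝ} (hx : B x d ≠ 0)
    (hxt : Coh B x (tx • d)) (hxc : ¬ Coh B (φ x) c) :
    ∀ᶠ t in 𝓝 tx, φ (t • d) = φ (tx • d) := by
  obtain ⟨t₀, ht₀⟩ := hne
  have hshift : ∀ t, B (x + (t - tx) • d) d = B x d ∧ Coh B (x + (t - tx) • d) (t • d) := by
    intro t
    have h1 : B (x + (t - tx) • d) d = B x d := by simp [hd]
    refine ⟨h1, ?_⟩
    have : x + (t - tx) • d - t • d = x - tx • d := by module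
    unfold Coh; rw [this]; exact hxt
  have hcont : Continuous fun t : ℝ => φ (x + (t - tx) • d) - c :=
    (hφ.comp (by fun_prop)).sub continuous_const
  have e : ∀ᶠ t in 𝓝 tx, ¬ Coh B (φ (x + (t - tx) • d)) c :=
    (hB.cont₂ hcont hcont).continuousAt.eventually_ne (by simpa [Coh] using hxc)
  have hval := hB.value_of_adjacent hφ hp hd hd0 hI hc hx hxt hxc
    (y := x + (t₀ - tx) • d) (by rwa [(hshift t₀).1]) ht₀ (hshift t₀).2
    (by simpa using hB.coh_line_self (a := x) hd (t₀ - tx) 0)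
  filter_upwards [e] with t ht
  have hval' := hB.value_of_adjacent hφ hp hd hd0 hI hc (x := x + (t - tx) • d)
    (by rwa [(hshift t).1]) (hshift t).2 ht
    (y := x + (t₀ - tx) • d) (by rwa [(hshift t₀).1]) ht₀ (hshift t₀).2
    (hB.coh_line_self hd _ _)
  rw [← hval', hval]

/-- The points with `B z d ≠ 0` are dense, so they meet the open set where `φ z` is not coherent with
`s`. -/
lemma exists_generic
    (hB : IsLorentzian B) (hφ : Continuous φ) (hd : B d d = 0) (hd0 : d ≠ 0)
    {s z : V} (h : ¬ Coh B (φ z) s) : ∃ z', ¬ Coh B (φ z') s ∧ B z' d ≠ 0 := by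
  by_cases hz : B z d = 0
  · obtain ⟨k, -, hk⟩ : {v | B v v = 0 ∧ B v d ≠ 0}.Nonempty :=
      closure_nonempty_iff.1 ⟨d, hB.dense d d hd hd0 hd⟩
    have hcont : Continuous fun t : ℝ => φ (z + t • k) - s :=
      (hφ.comp (by fun_prop)).sub continuous_const
    have e : ∀ᶠ t in 𝓝 (0 : ℝ), ¬ Coh B (φ (z + t • k)) s :=
      (hB.cont₂ hcont hcont).continuousAt.eventually_ne (by simpa [Coh] using h)
    obtain ⟨t, ht, ht0⟩ := ((e.filter_mono (nhdsWithin_le_nhds (s := {0}ᶜ))).and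
      self_mem_nhdsWithin).exists
    refine ⟨_, ht, ?_⟩
    simpa [hz] using ⟨ht0, hk⟩
  · exact ⟨z, h, hz⟩

/-- A coherency preserver that is constant on a segment of a null line is degenerate.

If the constant `c` is not a vertex, some `x` has `φ x` not coherent with `c`; then `φ` has the
constant value `h` near the foot of `x`. If `h` is not a vertex either, some `z` has `φ z` not
coherent with `h`, and `φ` is constant near the foot of `z`, with a value other than `h`. The cone of
(a small shift of) `x` meets the null line joining `z` to its foot in a point `y`, and
`value_of_adjacent` gives `φ y = h`; but `y` is coherent with `z`, a contradiction. -/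
lemma degenerate_of_const
    (hB : IsLorentzian B) (hφ : Continuous φ)
    (hp : ∀ x y, Coh B x y → Coh B (φ x) (φ y)) (hd : B d d = 0) (hd0 : d ≠ 0) (hI : IsOpen I)
    (hc : ∀ t ∈ I, φ (t • d) = c)
    (hne : I.Nonempty) : ∃ s, ∀ x, Coh B (φ x) s := by
  by_contra! hall
  obtain ⟨x', hx'⟩ := hall c
  obtain ⟨x, hxc, hxd⟩ := hB.exists_generic hφ hd hd0 hx'
  clear hx' x'
  set tx := B x x / (2 * B x d)
  have hxt : Coh B x (tx • d) := hB.coh_foot hd hxd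
  have hJ := hB.eventually_const hφ hp hd hd0 hI hc hne hxd hxt hxc
  set h := φ (tx • d) with hh
  obtain ⟨z', hz'⟩ := hall h
  obtain ⟨z, hzh, hzd⟩ := hB.exists_generic hφ hd hd0 hz'
  set tz := B z z / (2 * B z d)
  have hzt : Coh B z (tz • d) := hB.coh_foot hd hzd
  obtain ⟨J, hJh, hJo, hJx⟩ := eventually_nhds_iff.1 hJ
  have hJ₂ := hB.eventually_const hφ hp hd hd0 hJo hJh ⟨tx, hJx⟩ hzd hzt hzh
  obtain ⟨K, hK, hKo, hKz⟩ := eventually_nhds_iff.1 hJ₂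
  have hne₂ : φ (tz • d) ≠ h := fun e => hzh (e ▸ hp _ _ hzt)
  obtain ⟨t₀, ht₀⟩ := hne
  have hw : B (z - tz • d) (z - tz • d) = 0 := hzt
  -- A shift of `x` along `d` brings it into general position with respect to the line joining `z`
  -- to its foot, so that the cone of the shifted point meets that line.
  have hcont : Continuous fun t : ℝ => φ (x + (t - tx) • d) - c :=
    (hφ.comp (by fun_prop)).sub continuous_const
  have e1 : ∀ᶠ t in 𝓝 tx, ¬ Coh B (φ (x + (t - tx) • d)) c :=
    (hB.cont₂ hcont hcont).continuousAt.eventually_ne (by simpa [Coh] using hxc)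
  obtain ⟨t, ⟨⟨ht1, ht2⟩, ht3⟩⟩ : ∃ t, (¬ Coh B (φ (x + (t - tx) • d)) c ∧ φ (t • d) = h) ∧
      B (z - tz • d) (x + (t - tx) • d - tz • d) ≠ 0 := by
    have hwd : B (z - tz • d) d ≠ 0 := by simpa [hd] using hzd
    by_cases h0 : B (z - tz • d) (x - tz • d) = 0
    · obtain ⟨t, ht, htx⟩ := (((e1.and hJ).filter_mono
        (nhdsWithin_le_nhds (s := {tx}ᶜ))).and self_mem_nhdsWithin).exists
      refine ⟨t, ht, ?_⟩
      have : x + (t - tx) • d - tz • d = (x - tz • d) + (t - tx) • d := by module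
      rw [this, map_add, h0, map_smul, zero_add]
      exact mul_ne_zero (sub_ne_zero.2 htx) hwd
    · exact ⟨tx, ⟨by simpa using hxc, rfl⟩, by simpa using h0⟩
  obtain ⟨x', hx'⟩ : ∃ x', x' = x + (t - tx) • d := ⟨_, rfl⟩
  rw [← hx'] at ht1 ht3
  have hx'd : B x' d ≠ 0 := by rw [hx']; simpa [hd] using hxd
  have hx't : Coh B x' (t • d) := by
    have : x + (t - tx) • d - t • d = x - tx • d := by module
    unfold Coh; rw [hx', this]; exact hxt
  have hx'2 : ¬ Coh B (φ x') (φ (tz • d)) := by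
    intro hcoh
    have h1 : Coh B (φ x') h := ht2 ▸ hp _ _ hx't
    have hl : ∀ a b : ℝ, Coh B (φ (a • d)) (φ (b • d)) := fun a b => hp _ _ (hB.coh_smul hd a b)
    rw [← hc t₀ ht₀] at ht1
    exact ht1 (hB.coh_of_coh (hl tz tx) hne₂ hcoh h1 (hl _ _) (hl _ _))
  have htne : B (x' - tz • d) (x' - tz • d) ≠ 0 := by
    intro h0
    exact hx'2 (hp _ _ h0)
  obtain ⟨s, hs⟩ : ∃ s, s = B (x' - tz • d) (x' - tz • d) /
    (2 * B (z - tz • d) (x' - tz • d)) := ⟨_, rfl⟩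
  have hs0 : s ≠ 0 := by rw [hs]; exact div_ne_zero htne (mul_ne_zero two_ne_zero ht3)
  obtain ⟨y, hy⟩ : ∃ y, y = tz • d + s • (z - tz • d) := ⟨_, rfl⟩
  have hyd : B y d ≠ 0 := by
    rw [hy]; simpa [hd] using ⟨hs0, hzd⟩
  have hyt : Coh B y (tz • d) := by
    rw [hy]; simpa using hB.coh_line_self (a := tz • d) hw s 0
  have hyz : Coh B y z := by
    rw [hy]; simpa using hB.coh_line_self (a := tz • d) hw s 1
  have hyx : Coh B y x' := by
    have e : y - x' = s • (z - tz • d) - (x' - tz • d) := by rw [hy]; module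
    unfold Coh; rw [e]
    generalize z - tz • d = a at *
    generalize x' - tz • d = b at *
    simp only [map_sub, LinearMap.sub_apply, map_smul, LinearMap.smul_apply, hw, hB.symm b a,
      smul_eq_mul]
    rw [hs]; field_simp; ring
  have hfin := hB.value_of_adjacent hφ hp hd hd0 hKo hK hx'd hx't hx'2 hyd hKz hyt hyx
  rw [ht2] at hfin
  exact hzh (hfin ▸ (hp _ _ hyz).symm)

end Const

/-! ### Maps that are constant on no segment of a null line -/

section Nonconst

variable {φ : V → V} {d p : V}

/-- Suppose `φ 0 = φ d = p`. The equations say that the point `d + v` of the cone of `d` is coherent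
with the points `u₁`, `u₂` of the cone of `0`. Moving it slightly along its generator makes its image
different from `p`; the images of the three points then all lie on one null line through `p`. -/
lemma coh_of_common
    (hB : IsLorentzian B) (hφ : Continuous φ)
    (hp : ∀ x y, Coh B x y → Coh B (φ x) (φ y))
    (hnc : ∀ a u : V, B u u = 0 → u ≠ 0 → ∀ I : Set ℝ, IsOpen I → I.Nonempty → ∀ c,
      ∃ t ∈ I, φ (a + t • u) ≠ c)
    (hd : B d d = 0) (h0 : φ 0 = p) (h1 : φ d = p)
    {u₁ u₂ v : V} (hu₁ : B u₁ u₁ = 0) (hu₂ : B u₂ u₂ = 0) (hv : B v v = 0)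
    (hdv : B d v ≠ 0) (hv₁ : B d v = B d u₁ + B u₁ v) (hv₂ : B d v = B d u₂ + B u₂ v)
    (hn₁ : φ u₁ ≠ p) (hn₂ : φ u₂ ≠ p) : Coh B (φ u₁) (φ u₂) := by
  have hv0 : v ≠ 0 := by rintro rfl; simp at hdv
  have main : ∀ u, B u u = 0 → B d v = B d u + B u v → φ u ≠ p → ∀ᶠ τ in 𝓝 (1 : ℝ),
      ∃ s : ℝ, Coh B (d + τ • v) (s • u) ∧ φ (s • u) ≠ p := by
    intro u hu hvu hn
    have hcD : Continuous fun τ : ℝ => B d u + τ * B u v := by fun_prop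
    have hD1 : B d u + (1 : ℝ) * B u v ≠ 0 := by rw [one_mul, ← hvu]; exact hdv
    have e1 : ∀ᶠ τ in 𝓝 (1 : ℝ), B d u + τ * B u v ≠ 0 := hcD.continuousAt.eventually_ne hD1
    have hs : ContinuousAt (fun τ : ℝ => (τ * B d v) / (B d u + τ * B u v)) 1 :=
      (by fun_prop : Continuous fun τ : ℝ => τ * B d v).continuousAt.div hcD.continuousAt hD1
    have hφs : ContinuousAt (fun τ : ℝ => φ (((τ * B d v) / (B d u + τ * B u v)) • u)) 1 :=
      hφ.continuousAt.comp
        (f := fun τ : ℝ => ((τ * B d v) / (B d u + τ * B u v)) • u) (hs.smul continuousAt_const)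
    have e2 := hφs.eventually_ne (y := p) (by
      rw [one_mul, one_mul, ← hvu, div_self hdv, one_smul]; exact hn)
    filter_upwards [e1, e2] with τ h1 h2
    refine ⟨_, ?_, h2⟩
    unfold Coh
    simp only [map_sub, map_add, LinearMap.sub_apply, LinearMap.add_apply, map_smul,
      LinearMap.smul_apply, hd, hu, hv, hB.symm v d, hB.symm u d, hB.symm v u, smul_eq_mul]
    field_simp
    ring
  obtain ⟨K, hK, hKo, hK1⟩ := eventually_nhds_iff.1
    ((main u₁ hu₁ hv₁ hn₁).and (main u₂ hu₂ hv₂ hn₂))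
  obtain ⟨τ, hτ, hne⟩ := hnc d v hv hv0 K hKo ⟨1, hK1⟩ p
  obtain ⟨⟨s₁, hs₁, hne₁⟩, s₂, hs₂, hne₂⟩ := hK τ hτ
  have hyp : Coh B (φ (d + τ • v)) p := by
    rw [← h1]; exact hp _ _ (by simpa using hB.coh_line_self (a := d) hv τ 0)
  have hray : ∀ u : V, B u u = 0 → ∀ s : ℝ, Coh B (φ (s • u)) p ∧ Coh B (φ (s • u)) (φ u) := by
    intro u hu s
    constructor
    · rw [← h0]; exact hp _ _ (by simpa using hB.coh_smul hu s 0)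
    · exact hp _ _ (by simpa using hB.coh_smul hu s 1)
  have hr : ∀ u : V, B u u = 0 → Coh B (φ u) p := fun u hu => by simpa using (hray u hu 1).1
  have a1 : Coh B (φ (s₁ • u₁)) (φ (s₂ • u₂)) :=
    hB.coh_of_coh hyp hne (hp _ _ hs₁.symm) (hray _ hu₁ _).1 (hp _ _ hs₂.symm) (hray _ hu₂ _).1
  have a2 : Coh B (φ u₁) (φ (s₂ • u₂)) :=
    hB.coh_of_coh (hray _ hu₁ s₁).1 hne₁ (hray _ hu₁ _).2.symm (hr _ hu₁) a1.symm (hray _ hu₂ _).1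
  exact hB.coh_of_coh (hray _ hu₂ s₂).1 hne₂ a2 (hr _ hu₁) (hray _ hu₂ s₂).2.symm (hr _ hu₂)

/-- A vector `v` as in `coh_of_common` exists after a small rescaling of `u₁`. With
`e₁, e₂` the multiples of `u₁, u₂` such that `B eᵢ d = 1`, it is sought as a multiple `σ⁻¹` of the
null vector `e₁ + l (e₂ - e₁) - l (1 - l) κ d`; the equations determine `l` and `σ`, and the
rescaling `ρ⁻¹ • e₁` of `u₁` serves to make `σ` nonzero. -/
lemma coh_of_transversal
    (hB : IsLorentzian B) (hφ : Continuous φ)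
    (hp : ∀ x y, Coh B x y → Coh B (φ x) (φ y))
    (hnc : ∀ a u : V, B u u = 0 → u ≠ 0 → ∀ I : Set ℝ, IsOpen I → I.Nonempty → ∀ c,
      ∃ t ∈ I, φ (a + t • u) ≠ c)
    (hd : B d d = 0) (h0 : φ 0 = p) (h1 : φ d = p)
    {u₁ u₂ : V} (hu₁ : B u₁ u₁ = 0) (hu₂ : B u₂ u₂ = 0)
    (hd₁ : B u₁ d ≠ 0) (hd₂ : B u₂ d ≠ 0) (hn₁ : φ u₁ ≠ p) (hn₂ : φ u₂ ≠ p) :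
    Coh B (φ u₁) (φ u₂) := by
  by_cases hk : B u₁ u₂ = 0
  · apply hp
    unfold Coh
    simp [hu₁, hu₂, hk, hB.symm u₂ u₁]
  obtain ⟨ρ₁, hρ₁⟩ : ∃ ρ, ρ = (B u₁ d)⁻¹ := ⟨_, rfl⟩
  obtain ⟨ρ₂, hρ₂⟩ : ∃ ρ, ρ = (B u₂ d)⁻¹ := ⟨_, rfl⟩
  have hρ₁0 : ρ₁ ≠ 0 := by rw [hρ₁]; exact inv_ne_zero hd₁
  have hρ₂0 : ρ₂ ≠ 0 := by rw [hρ₂]; exact inv_ne_zero hd₂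
  obtain ⟨e₁, he₁⟩ : ∃ e, e = ρ₁ • u₁ := ⟨_, rfl⟩
  obtain ⟨e₂, he₂⟩ : ∃ e, e = ρ₂ • u₂ := ⟨_, rfl⟩
  have hu₁e : u₁ = ρ₁⁻¹ • e₁ := by rw [he₁, inv_smul_smul₀ hρ₁0]
  have hu₂e : u₂ = ρ₂⁻¹ • e₂ := by rw [he₂, inv_smul_smul₀ hρ₂0]
  have he₁d : B e₁ d = 1 := by rw [he₁, hρ₁]; simp [hd₁]
  have he₂d : B e₂ d = 1 := by rw [he₂, hρ₂]; simp [hd₂]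
  have hde₁ : B d e₁ = 1 := by rw [hB.symm, he₁d]
  have hde₂ : B d e₂ = 1 := by rw [hB.symm, he₂d]
  have he₁n : B e₁ e₁ = 0 := by rw [he₁]; simp [hu₁]
  have he₂n : B e₂ e₂ = 0 := by rw [he₂]; simp [hu₂]
  obtain ⟨κ, hκ⟩ : ∃ κ, κ = B e₁ e₂ := ⟨_, rfl⟩
  have hκ0 : κ ≠ 0 := by rw [hκ, he₁, he₂]; simp [hρ₁0, hρ₂0, hk]
  have hκ' : B e₂ e₁ = κ := by rw [hκ, hB.symm]
  have hcont : ContinuousAt (fun ρ : ℝ => φ (ρ⁻¹ • e₁)) ρ₁ :=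
    hφ.continuousAt.comp (f := fun ρ : ℝ => ρ⁻¹ • e₁)
      ((continuousAt_inv₀ hρ₁0).smul continuousAt_const)
  have ev : ∀ᶠ ρ in 𝓝 ρ₁, φ (ρ⁻¹ • e₁) ≠ p ∧ ρ ≠ 0 :=
    (hcont.eventually_ne (by rwa [← hu₁e])).and (continuousAt_id.eventually_ne hρ₁0)
  -- The quadratic is `-4 * κ * σ`. Being monic in `ρ`, it cannot vanish at the three equally
  -- spaced points `ρ₁`, `ρ₁ ± ε / 2`.
  obtain ⟨ρ, ⟨hρn, hρ0⟩, hq⟩ : ∃ ρ, (φ (ρ⁻¹ • e₁) ≠ p ∧ ρ ≠ 0) ∧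
      (κ + ρ - ρ₂) ^ 2 - 4 * κ * ρ ≠ 0 := by
    by_contra! hall
    obtain ⟨ε, hε, hb⟩ := Metric.eventually_nhds_iff.1 ev
    have q0 := hall ρ₁ (hb (by simpa using hε))
    have q1 := hall (ρ₁ + ε / 2) (hb (by simp [abs_of_pos hε]; linarith))
    have q2 := hall (ρ₁ - ε / 2) (hb (by simp [abs_of_pos hε]; linarith))
    nlinarith
  obtain ⟨l, hl⟩ : ∃ l, l = (1 + (ρ - ρ₂) / κ) / 2 := ⟨_, rfl⟩
  have hl' : ρ₂ = ρ - (2 * l - 1) * κ := by rw [hl]; field_simp; ring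
  obtain ⟨σ, hσ⟩ : ∃ σ, σ = ρ - l ^ 2 * κ := ⟨_, rfl⟩
  have hσ0 : σ ≠ 0 := by
    intro h
    apply hq
    rw [hl']
    rw [h] at hσ
    linear_combination (4 * κ) * hσ
  obtain ⟨v, hv⟩ : ∃ v, v = σ⁻¹ • (e₁ + l • (e₂ - e₁) - (l * (1 - l) * κ) • d) := ⟨_, rfl⟩
  have hvn : B v v = 0 := by
    rw [hv]
    simp only [map_sub, map_add, LinearMap.sub_apply, LinearMap.add_apply, map_smul,
      LinearMap.smul_apply, hd, he₁n, he₂n, he₁d, he₂d, hde₁, hde₂, ← hκ, hκ', smul_eq_mul]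
    ring
  have hdv : B d v = σ⁻¹ := by
    rw [hv]
    simp only [map_sub, map_add, map_smul, hd, hde₁, hde₂, smul_eq_mul]
    ring
  have he₁v : B e₁ v = σ⁻¹ * (l ^ 2 * κ) := by
    rw [hv]
    simp only [map_sub, map_add, map_smul, he₁n, he₁d, ← hκ, smul_eq_mul]
    ring
  have he₂v : B e₂ v = σ⁻¹ * ((1 - l) ^ 2 * κ) := by
    rw [hv]
    simp only [map_sub, map_add, map_smul, he₂n, he₂d, hκ', smul_eq_mul]
    ring
  have hcoh : Coh B (φ (ρ⁻¹ • e₁)) (φ u₂) := by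
    refine hB.coh_of_common hφ hp hnc hd h0 h1 (v := v) (by simp [he₁n]) hu₂ hvn
      (by rw [hdv]; exact inv_ne_zero hσ0) ?_ ?_ hρn hn₂
    · simp only [map_smul, LinearMap.smul_apply, hdv, hde₁, he₁v, smul_eq_mul]
      field_simp
      rw [hσ]; ring
    · rw [hu₂e]
      simp only [map_smul, LinearMap.smul_apply, hdv, hde₂, he₂v, smul_eq_mul]
      field_simp
      rw [hσ, hl']; ring
  have hr : ∀ u : V, B u u = 0 → Coh B (φ u) p := fun u hu => by
    rw [← h0]; exact hp _ _ (by simpa using hB.coh_smul hu 1 0)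
  refine hB.coh_of_coh (p := φ (ρ⁻¹ • e₁)) (m := p) (hr _ (by simp [he₁n])) hρn
    ?_ (hr _ hu₁) hcoh.symm (hr _ hu₂)
  rw [hu₁e]
  exact hp _ _ (hB.coh_smul he₁n _ _)

/-- If `φ` is constant on no null segment and identifies the adjacent points `0` and `d`, then it is
degenerate. By `coh_of_transversal` the cone of `0` is mapped into one null line, the one through `p`
and `φ u₀`. Write any other point as `z = (z - w) + w` with null summands. The points `z + t • w` are
coherent with `z - w` and with `w + t • w`, whose images lie on that line; if `φ z` were not coherent
with `p`, these images would coincide for all small `t`, and `φ` would be constant on a null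
segment. -/
lemma degenerate_of_nonconst
    (hB : IsLorentzian B) (hφ : Continuous φ)
    (hp : ∀ x y, Coh B x y → Coh B (φ x) (φ y))
    (hnc : ∀ a u : V, B u u = 0 → u ≠ 0 → ∀ I : Set ℝ, IsOpen I → I.Nonempty → ∀ c,
      ∃ t ∈ I, φ (a + t • u) ≠ c)
    (hd : B d d = 0) (h0 : φ 0 = p) (h1 : φ d = p)
    (hd0 : d ≠ 0) : ∃ s, ∀ x, Coh B (φ x) s := by
  obtain ⟨k, hk, hkd⟩ : {v | B v v = 0 ∧ B v d ≠ 0}.Nonempty :=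
    closure_nonempty_iff.1 ⟨d, hB.dense d d hd hd0 hd⟩
  have hk0 : k ≠ 0 := by rintro rfl; simp at hkd
  obtain ⟨t, ht, htp⟩ := hnc 0 k hk hk0 (Ioi 0) isOpen_Ioi nonempty_Ioi p
  rw [zero_add] at htp
  obtain ⟨u₀, hu₀⟩ : ∃ u, u = t • k := ⟨_, rfl⟩
  rw [← hu₀] at htp
  have hu₀n : B u₀ u₀ = 0 := by rw [hu₀]; simp [hk]
  have hu₀d : B u₀ d ≠ 0 := by rw [hu₀]; simpa [hkd] using (ne_of_gt ht : t ≠ 0)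
  have hr : ∀ u : V, B u u = 0 → Coh B (φ u) p := fun u hu => by
    rw [← h0]; exact hp _ _ (by simpa using hB.coh_smul hu 1 0)
  have hl : ∀ u, B u u = 0 → Coh B (φ u) (φ u₀) := by
    have hclosed : IsClosed {u | Coh B (φ u) (φ u₀)} :=
      isClosed_eq (hB.cont₂ (hφ.sub continuous_const) (hφ.sub continuous_const)) continuous_const
    intro u hu
    refine closure_minimal ?_ hclosed (hB.dense d u hd hd0 hu)
    rintro v ⟨hv, hvd⟩
    by_cases hvp : φ v = p
    · change Coh B (φ v) (φ u₀)
      rw [hvp]; exact (hr _ hu₀n).symm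
    · exact hB.coh_of_transversal hφ hp hnc hd h0 h1 hv hu₀n hvd hu₀d hvp htp
  refine ⟨p, fun z => ?_⟩
  by_contra hz
  obtain ⟨N, -, -, hsp⟩ := hB.split
  obtain ⟨w, hw, hvw, -⟩ := hsp z
  have hw0 : w ≠ 0 := by
    rintro rfl
    exact hz (hr z (by simpa using hvw))
  have hcont : Continuous fun t : ℝ => φ (z + t • w) - p :=
    (hφ.comp (by fun_prop)).sub continuous_const
  have e : ∀ᶠ t in 𝓝 (0 : ℝ), ¬ Coh B (φ (z + t • w)) p :=
    (hB.cont₂ hcont hcont).continuousAt.eventually_ne (by simpa [Coh] using hz)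
  obtain ⟨K, hK, hKo, hK0⟩ := eventually_nhds_iff.1 e
  obtain ⟨t, ht, hne⟩ := hnc w w hw hw0 K hKo ⟨0, hK0⟩ (φ (z - w))
  have hn : B (w + t • w) (w + t • w) = 0 := by simp [hw]
  refine hK t ht (hB.coh_of_coh (p := φ (w + t • w)) (m := φ (z - w)) ?_ hne ?_ ?_
    (hr _ hn).symm (hr _ hvw).symm)
  · exact hB.coh_of_coh (hr _ hu₀n) htp (hl _ hn) (hr _ hn) (hl _ hvw) (hr _ hvw)
  · apply hp
    have : z + t • w - (w + t • w) = z - w := by abel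
    unfold Coh; rw [this]; exact hvw
  · apply hp
    have : z + t • w - (z - w) = (1 + t) • w := by module
    unfold Coh; rw [this]; simp [hw]

end Nonconst

/-- The dichotomy for an arbitrary Lorentzian form: translating the domain reduces it to
`degenerate_of_const` and `degenerate_of_nonconst`. -/
lemma adjacency_or_degenerate {φ : V → V} (hB : IsLorentzian B) (hφ : Continuous φ)
    (hp : ∀ x y, Coh B x y → Coh B (φ x) (φ y)) :
    (∀ a b, Coh B a b → a ≠ b → φ a ≠ φ b) ∨ ∃ s, ∀ x, Coh B (φ x) s := by
  by_contra! hcon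
  obtain ⟨⟨a, b, hab, hne, heq⟩, hdeg⟩ := hcon
  have hshift : ∀ a : V, Continuous (fun x => φ (a + x)) ∧
      ∀ x y, Coh B x y → Coh B (φ (a + x)) (φ (a + y)) := by
    refine fun a => ⟨hφ.comp (by fun_prop), fun x y h => hp _ _ ?_⟩
    unfold Coh; rw [add_sub_add_left_eq_sub]; exact h
  have hback : ∀ a : V, ¬ ∃ s, ∀ x, Coh B (φ (a + x)) s := by
    rintro a ⟨s, hs⟩
    obtain ⟨x, hx⟩ := hdeg s
    exact hx (by simpa using hs (x - a))
  have hnc : ∀ a u : V, B u u = 0 → u ≠ 0 → ∀ I : Set ℝ, IsOpen I → I.Nonempty → ∀ c,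
      ∃ t ∈ I, φ (a + t • u) ≠ c := by
    intro a u hu hu0 I hI hIne c
    by_contra! hc
    exact hback a (hB.degenerate_of_const (hshift a).1 (hshift a).2 hu hu0 hI hc hIne)
  refine hback a (hB.degenerate_of_nonconst (d := b - a) (p := φ a) (hshift a).1 (hshift a).2
    ?_ hab.symm (by simp) (by simp [heq]) (sub_ne_zero.2 hne.symm))
  intro x u hu hu0 I hI hIne c
  simpa [add_assoc] using hnc (a + x) u hu hu0 I hI hIne c

end IsLorentzian
end Abstract

/-! ### The Minkowski form -/

/-- The symmetric bilinear form with `mB n x x = mq n x`. -/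
noncomputable def mB (n : ℕ) : (Fin n → ℝ) →ₗ[ℝ] (Fin n → ℝ) →ₗ[ℝ] ℝ :=
  LinearMap.mk₂ ℝ
    (fun x y => ∑ i : Fin n, (if (i : ℕ) = n - 1 then (1 : ℝ) else -1) * (x i * y i))
    (fun x x' y => by
      rw [← Finset.sum_add_distrib]; exact Finset.sum_congr rfl fun i _ => by
        simp only [Pi.add_apply]; ring)
    (fun c x y => by
      rw [smul_eq_mul, Finset.mul_sum]; exact Finset.sum_congr rfl fun i _ => by
        simp only [Pi.smul_apply, smul_eq_mul]; ring)
    (fun x y y' => by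
      rw [← Finset.sum_add_distrib]; exact Finset.sum_congr rfl fun i _ => by
        simp only [Pi.add_apply]; ring)
    (fun c x y => by
      rw [smul_eq_mul, Finset.mul_sum]; exact Finset.sum_congr rfl fun i _ => by
        simp only [Pi.smul_apply, smul_eq_mul]; ring)

lemma mB_apply (n : ℕ) (x y : Fin n → ℝ) : mB n x y =
    ∑ i : Fin n, (if (i : ℕ) = n - 1 then (1 : ℝ) else -1) * (x i * y i) := rfl

lemma mB_self (n : ℕ) (x : Fin n → ℝ) : mB n x x = mq n x := by
  simp only [mB_apply, mq, sq]

lemma mB_eq {n : ℕ} (m : Fin n) (hm : (m : ℕ) = n - 1) (x y : Fin n → ℝ) :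
    mB n x y = x m * y m - ∑ i ∈ Finset.univ.erase m, x i * y i := by
  rw [mB_apply, ← Finset.add_sum_erase _ _ (Finset.mem_univ m), if_pos hm, one_mul, sub_eq_add_neg,
    ← Finset.sum_neg_distrib]
  congr 1
  refine Finset.sum_congr rfl fun i hi => ?_
  have : (i : ℕ) ≠ n - 1 := fun h => (Finset.mem_erase.1 hi).1 (Fin.ext (h.trans hm.symm))
  rw [if_neg this, neg_one_mul]

lemma mB_definite {n : ℕ} (m : Fin n) (hm : (m : ℕ) = n - 1) {x : Fin n → ℝ}
    (hx : mB n x x = 0) (h0 : x m = 0) : x = 0 := by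
  rw [mB_eq m hm, h0, mul_zero, zero_sub, neg_eq_zero,
    Finset.sum_eq_zero_iff_of_nonneg fun i _ => mul_self_nonneg _] at hx
  ext i
  by_cases hi : i = m
  · rw [hi, h0]; rfl
  · simpa using hx i (by simp [hi])

lemma mB_symm (n : ℕ) (x y : Fin n → ℝ) : mB n x y = mB n y x := by
  simp only [mB_apply, mul_comm (x _)]

lemma mB_parallel {n : ℕ} (m : Fin n) (hm : (m : ℕ) = n - 1) {u v : Fin n → ℝ}
    (hu : mB n u u = 0) (hv : mB n v v = 0) (huv : mB n u v = 0) (hv0 : v ≠ 0) :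
    ∃ c : ℝ, u = c • v := by
  have hvm : v m ≠ 0 := fun h => hv0 (mB_definite m hm hv h)
  refine ⟨u m / v m, sub_eq_zero.1 (mB_definite m hm ?_ ?_)⟩
  · simp [hu, hv, huv, mB_symm n v u]
  · simp [hvm]

/-- Splitting along the two null directions `e ± e_m`, where `e` is a unit vector along the spatial part
of `v` (any spatial unit vector if that part is zero). -/
lemma mB_split {n : ℕ} (m : Fin n) (hm : (m : ℕ) = n - 1) {j : Fin n} (hj : j ≠ m)
    (v : Fin n → ℝ) : ∃ w, mB n w w = 0 ∧ mB n (v - w) (v - w) = 0 ∧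
      ‖w‖ ≤ √(∑ i ∈ Finset.univ.erase m, v i * v i) + |v m| := by
  set S := ∑ i ∈ Finset.univ.erase m, v i * v i with hS
  have hS0 : 0 ≤ S := Finset.sum_nonneg fun i _ => mul_self_nonneg _
  obtain ⟨e, hem, he1, hve⟩ : ∃ e : Fin n → ℝ, e m = 0 ∧
      ∑ i ∈ Finset.univ.erase m, e i * e i = 1 ∧ ∀ i, i ≠ m → v i = √S * e i := by
    by_cases h : S = 0
    · refine ⟨Pi.single j 1, by simp [hj.symm], ?_, ?_⟩
      · simp [Pi.single_apply, hj]
      · intro i hi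
        rw [h, Real.sqrt_zero, zero_mul]
        rw [hS, Finset.sum_eq_zero_iff_of_nonneg fun i _ => mul_self_nonneg _] at h
        simpa using h i (by simp [hi])
    · have hs : √S ≠ 0 := (Real.sqrt_pos.2 (lt_of_le_of_ne hS0 (Ne.symm h))).ne'
      refine ⟨fun i => if i = m then 0 else v i / √S, by simp, ?_, ?_⟩
      · have : ∀ i ∈ Finset.univ.erase m, (if i = m then 0 else v i / √S) *
            (if i = m then 0 else v i / √S) = v i * v i / S := by
          intro i hi
          rw [if_neg (Finset.mem_erase.1 hi).1, div_mul_div_comm, Real.mul_self_sqrt hS0]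
        rw [Finset.sum_congr rfl this, ← Finset.sum_div, ← hS, div_self h]
      · intro i hi
        simp only [if_neg hi]; field_simp
  have hnull : ∀ a b : ℝ, b * b = 1 → mB n (a • (e + b • Pi.single m 1))
      (a • (e + b • Pi.single m 1)) = 0 := by
    intro a b hb
    have : mB n (e + b • Pi.single m 1) (e + b • Pi.single m 1) = 0 := by
      rw [mB_eq m hm]
      have : ∀ i ∈ Finset.univ.erase m, (e + b • (Pi.single m 1 : Fin n → ℝ)) i *
          (e + b • (Pi.single m 1 : Fin n → ℝ)) i = e i * e i := by
        intro i hi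
        simp [(Finset.mem_erase.1 hi).1]
      rw [Finset.sum_congr rfl this, he1]
      simp [hem, hb]
    simp only [map_smul, LinearMap.smul_apply, this, smul_zero]
  refine ⟨((√S + v m) / 2) • (e + (1 : ℝ) • Pi.single m 1), hnull _ _ (by norm_num), ?_, ?_⟩
  · have : v - ((√S + v m) / 2) • (e + (1 : ℝ) • Pi.single m 1) =
        ((√S - v m) / 2) • (e + (-1 : ℝ) • Pi.single m 1) := by
      ext i
      by_cases hi : i = m
      · subst hi; simp [hem]; ring
      · simp [hi, hve i hi]; ring
    rw [this]; exact hnull _ _ (by norm_num)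
  · have hle : ‖e + (1 : ℝ) • (Pi.single m 1 : Fin n → ℝ)‖ ≤ 1 := by
      refine (pi_norm_le_iff_of_nonneg zero_le_one).2 fun i => ?_
      by_cases hi : i = m
      · subst hi; simp [hem]
      · have : e i * e i ≤ 1 := by
          rw [← he1]
          exact Finset.single_le_sum (f := fun i => e i * e i) (fun i _ => mul_self_nonneg _)
            (by simp [hi])
        simpa [Pi.single_apply, hi] using abs_le_one_iff_mul_self_le_one.2 this
    have h2 : |(√S + v m) / 2| ≤ √S + |v m| := by
      have := Real.sqrt_nonneg S
      rw [abs_le]; constructor <;> cases abs_cases (v m) <;> linarith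
    calc _ ≤ |(√S + v m) / 2| * 1 := by
          rw [norm_smul]; exact mul_le_mul_of_nonneg_left hle (abs_nonneg _)
      _ ≤ _ := by rwa [mul_one]

/-- If `u = c • d`, then for null `k` with `B d k ≠ 0` and nonzero `e` orthogonal to `d` and `k` (this
needs three dimensions), `u` is a limit of the null vectors
`c • d + t • e - (t ^ 2 * B e e / (2 * c * B d k)) • k`. -/
lemma mB_dense {n : ℕ} (hn : 3 ≤ n) (m : Fin n) (hm : (m : ℕ) = n - 1) {d u : Fin n → ℝ}
    (hd : mB n d d = 0) (hd0 : d ≠ 0) (hu : mB n u u = 0) :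
    u ∈ closure {v | mB n v v = 0 ∧ mB n v d ≠ 0} := by
  have hdm : d m ≠ 0 := fun h => hd0 (mB_definite m hm hd h)
  by_cases hud : mB n u d = 0
  swap
  · exact subset_closure ⟨hu, hud⟩
  obtain ⟨c, rfl⟩ := mB_parallel m hm hu hd hud hd0
  obtain ⟨k, hk, hkd⟩ : ∃ k, mB n k k = 0 ∧ mB n k d ≠ 0 := by
    refine ⟨fun i => if i = m then d i else - d i, ?_, ?_⟩
    · rw [← hd, mB_eq m hm, mB_eq m hm]
      congr 1
      · simp
      · refine Finset.sum_congr rfl fun i hi => ?_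
        simp [(Finset.mem_erase.1 hi).1]
    · have h1 : mB n (fun i => if i = m then d i else - d i) d = 2 * (d m * d m) := by
        rw [mB_eq m hm] at hd ⊢
        have : ∀ i ∈ Finset.univ.erase m, (if i = m then d i else - d i) * d i = -(d i * d i) := by
          intro i hi
          rw [if_neg (Finset.mem_erase.1 hi).1]; ring
        rw [Finset.sum_congr rfl this, Finset.sum_neg_distrib]
        simp only [if_true]
        linarith
      rw [h1]; positivity
  have hdk : mB n d k ≠ 0 := by rwa [mB_symm]
  by_cases hc : c = 0
  · subst hc
    have hlim : Tendsto (fun t : ℝ => t • k) (𝓝[≠] 0) (𝓝 ((0 : ℝ) • d)) := by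
      have : Continuous fun t : ℝ => t • k := by fun_prop
      simpa using (this.tendsto 0).mono_left nhdsWithin_le_nhds
    refine mem_closure_of_tendsto hlim ?_
    filter_upwards [self_mem_nhdsWithin] with t ht
    refine ⟨by simp [hk], ?_⟩
    simpa [hkd] using ht
  obtain ⟨e, hed, hek, he0⟩ : ∃ e, mB n d e = 0 ∧ mB n k e = 0 ∧ e ≠ 0 := by
    have hlt : Module.finrank ℝ (ℝ × ℝ) < Module.finrank ℝ (Fin n → ℝ) := by
      simp; omega
    obtain ⟨e, he, he0⟩ := Submodule.exists_mem_ne_zero_of_ne_bot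
      (LinearMap.ker_ne_bot_of_finrank_lt (f := (mB n d).prod (mB n k)) hlt)
    have he' : ((mB n d e, mB n k e) : ℝ × ℝ) = 0 := he
    exact ⟨e, congrArg Prod.fst he', congrArg Prod.snd he', he0⟩
  have hde : mB n e d = 0 := by rwa [mB_symm]
  have hke : mB n e k = 0 := by rwa [mB_symm]
  have hee : mB n e e ≠ 0 := by
    intro h
    obtain ⟨a, rfl⟩ := mB_parallel m hm h hd hde hd0
    simp [hdk] at hke
    simp [hke] at he0
  have hlim : Tendsto (fun t : ℝ => c • d + t • e - (t ^ 2 * mB n e e / (2 * c * mB n d k)) • k)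
      (𝓝[≠] 0) (𝓝 (c • d)) := by
    have : Continuous fun t : ℝ =>
      c • d + t • e - (t ^ 2 * mB n e e / (2 * c * mB n d k)) • k := by fun_prop
    simpa using (this.tendsto 0).mono_left nhdsWithin_le_nhds
  refine mem_closure_of_tendsto hlim ?_
  filter_upwards [self_mem_nhdsWithin] with t ht
  have ht0 : t ≠ 0 := ht
  constructor
  · simp only [map_smul, LinearMap.smul_apply, map_sub, LinearMap.sub_apply, map_add,
      LinearMap.add_apply, smul_eq_mul, hd, hk, hed, hek, hde, hke, mB_symm n k d]
    field_simp
    ring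
  · simp only [map_smul, LinearMap.smul_apply, map_sub, LinearMap.sub_apply, map_add,
      LinearMap.add_apply, smul_eq_mul, hd, hde, mB_symm n k d]
    simp [ht0, hee, hc, hdk]

lemma mB_isLorentzian {n : ℕ} (hn : 3 ≤ n) : IsLorentzian (mB n) := by
  have hlt : n - 1 < n := by omega
  set m : Fin n := ⟨n - 1, hlt⟩ with hm'
  have hm : (m : ℕ) = n - 1 := rfl
  have hj : (⟨0, by omega⟩ : Fin n) ≠ m := by
    intro h
    have := congrArg Fin.val h
    simp only [hm] at this
    omega
  refine ⟨mB_symm n, ?_, fun u v => mB_parallel m hm,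
    ⟨fun v => √(∑ i ∈ Finset.univ.erase m, v i * v i) + |v m|, by fun_prop, by simp,
      mB_split m hm hj⟩, fun d u => mB_dense hn m hm⟩
  simp only [mB_apply]
  fun_prop

theorem continuous_coherency_preserver_preserves_adjacency_or_is_degenerate
    (n : ℕ) (hn : 4 ≤ n) (φ : (Fin n → ℝ) → (Fin n → ℝ))
    (hcont : Continuous φ)
    (hpres : ∀ a b : Fin n → ℝ, mq n (b - a) = 0 → mq n (φ b - φ a) = 0) :
    (∀ a b : Fin n → ℝ, mq n (a - b) = 0 → a ≠ b →
       mq n (φ a - φ b) = 0 ∧ φ a ≠ φ b) ∨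
    (∃ s' : Fin n → ℝ, ∀ x : Fin n → ℝ, mq n (φ x - s') = 0) := by
  have hcoh : ∀ x y, Coh (mB n) x y ↔ mq n (x - y) = 0 := fun x y => by rw [Coh, mB_self]
  rcases (mB_isLorentzian (by omega : 3 ≤ n)).adjacency_or_degenerate hcont
    (fun x y h => (hcoh _ _).2 (hpres y x ((hcoh _ _).1 h))) with h | ⟨s, hs⟩
  · refine Or.inl fun a b hab hne => ⟨hpres b a hab, h a b ((hcoh _ _).2 hab) hne⟩
  · exact Or.inr ⟨s, fun x => (hcoh _ _).1 (hs x)⟩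
end

section
/- Let n ≥ 2 and let q(x₁,…,xₙ) = xₙ² − (x₁² + ⋯ + x_{n−1}²) on ℝⁿ. If a, b, c ∈ ℝⁿ satisfy q(a−b) = q(b−c) = q(a−c) = 0, then a, b, c lie on a common affine line (i.e., the set {a, b, c} is collinear over ℝ). -/
/-- The form is negative definite on the hyperplane where the last coordinate vanishes. -/
lemma eq_zero_of_mq_eq_zero {n : ℕ} {w : Fin n → ℝ} (L : Fin n) (hL : (L : ℕ) = n - 1)
    (hw : mq n w = 0) (hwL : w L = 0) : w = 0 := by
  have hsum : ∑ i : Fin n, w i ^ 2 = 0 := by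
    rw [← neg_eq_zero, ← hw, mq, ← Finset.sum_neg_distrib]
    refine Finset.sum_congr rfl fun i _ => ?_
    split_ifs with hi
    · have : i = L := Fin.ext (hi.trans hL.symm)
      simp [this, hwL]
    · ring
  funext i
  have h := (Finset.sum_eq_zero_iff_of_nonneg fun i _ => sq_nonneg (w i)).1 hsum i
    (Finset.mem_univ i)
  exact pow_eq_zero_iff two_ne_zero |>.1 h

/-- Polarization: on the span of `u` and `v` the form is determined by its values at `u`, `v` and
`u - v`. -/
lemma mq_smul_add_smul {n : ℕ} (u v : Fin n → ℝ) (s t : ℝ) :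
    mq n (s • u + t • v) =
      (s ^ 2 + s * t) * mq n u + (t ^ 2 + s * t) * mq n v - s * t * mq n (u - v) := by
  simp only [mq, Finset.mul_sum, ← Finset.sum_add_distrib, ← Finset.sum_sub_distrib]
  refine Finset.sum_congr rfl fun i _ => ?_
  simp only [Pi.add_apply, Pi.smul_apply, Pi.sub_apply, smul_eq_mul]
  ring

theorem pairwise_coherent_points_are_collinear
    (n : ℕ) (hn : 2 ≤ n) (a b c : Fin n → ℝ)
    (hab : mq n (a - b) = 0) (hbc : mq n (b - c) = 0) (hac : mq n (a - c) = 0) :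
    Collinear ℝ ({a, b, c} : Set (Fin n → ℝ)) := by
  let L : Fin n := ⟨n - 1, by omega⟩
  have hcb : mq n (c - b) = 0 := by
    rw [← hbc]
    refine Finset.sum_congr rfl fun i _ => ?_
    simp only [Pi.sub_apply]
    ring
  by_cases h0 : (a - b) L = 0
  · have hab' : a = b := sub_eq_zero.1 (eq_zero_of_mq_eq_zero L rfl hab h0)
    simpa [hab'] using collinear_pair ℝ b c
  · have hw : (c - b) L • (a - b) + (-(a - b) L) • (c - b) = 0 := by
      refine eq_zero_of_mq_eq_zero L rfl ?_ ?_
      · rw [mq_smul_add_smul, hab, hcb, sub_sub_sub_cancel_right, hac]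
        ring
      · simp only [Pi.add_apply, Pi.smul_apply, smul_eq_mul]
        ring
    rw [collinear_iff_of_mem (p₀ := b) (by simp)]
    refine ⟨a - b, ?_⟩
    rintro p (rfl | rfl | rfl)
    · exact ⟨1, by simp⟩
    · exact ⟨0, by simp⟩
    · refine ⟨(p - b) L / (a - b) L, ?_⟩
      funext i
      have hi := congrFun hw i
      simp only [Pi.add_apply, Pi.smul_apply, smul_eq_mul, Pi.zero_apply] at hi
      rw [vadd_eq_add, Pi.add_apply, Pi.smul_apply, smul_eq_mul, ← sub_eq_iff_eq_add,
        ← Pi.sub_apply, div_mul_eq_mul_div, eq_div_iff h0]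
      linarith
end

section
/- Let n ≥ 2 and let q(x₁,…,xₙ) = xₙ² − (x₁² + ⋯ + x_{n−1}²) on ℝⁿ. A subset S ⊆ ℝⁿ is a maximal coherent set (i.e., S is coherent and S is not a proper subset of any coherent set) if and only if there exist a ∈ ℝⁿ and a nonzero x ∈ ℝⁿ with q(x) = 0 such that S = {a + t·x : t ∈ ℝ}. -/
/-- A subset of `ℝⁿ` is coherent when its elements are pairwise coherent. -/
def IsCoherentSet (n : ℕ) (S : Set (Fin n → ℝ)) : Prop :=
  ∀ x ∈ S, ∀ y ∈ S, mq n (x - y) = 0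

lemma mq_smul (n : ℕ) (t : ℝ) (x : Fin n → ℝ) : mq n (t • x) = t ^ 2 * mq n x := by
  simp only [mq, Finset.mul_sum, Pi.smul_apply, smul_eq_mul]
  exact Finset.sum_congr rfl fun i _ => by ring

/-- Expansion of `q(y - t x)` with the polar form eliminated in favour of `q(y - x)`. -/
lemma mq_sub_smul (n : ℕ) (t : ℝ) (x y : Fin n → ℝ) :
    mq n (y - t • x) = (1 - t) * mq n y + (t ^ 2 - t) * mq n x + t * mq n (y - x) := by
  simp only [mq, Finset.mul_sum, Pi.smul_apply, Pi.sub_apply, smul_eq_mul,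
    ← Finset.sum_add_distrib]
  exact Finset.sum_congr rfl fun i _ => by ring

lemma eq_zero_of_mq_eq_zero_of_last {n : ℕ} {z : Fin n → ℝ} (hz : mq n z = 0)
    (hl : ∀ i : Fin n, (i : ℕ) = n - 1 → z i = 0) : z = 0 := by
  have hs : mq n z = -∑ i, z i ^ 2 := by
    rw [mq, ← Finset.sum_neg_distrib]
    refine Finset.sum_congr rfl fun i _ => ?_
    by_cases hi : (i : ℕ) = n - 1
    · simp [hl i hi]
    · simp [hi]
  have h0 : ∑ i, z i ^ 2 = 0 := by linarith
  rw [Finset.sum_eq_zero_iff_of_nonneg fun i _ => sq_nonneg _] at h0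
  funext i
  exact pow_eq_zero_iff two_ne_zero |>.1 (h0 i (Finset.mem_univ i))

lemma exists_smul_of_isotropic {n : ℕ} (hn : 2 ≤ n) {x y : Fin n → ℝ} (hx0 : x ≠ 0)
    (hx : mq n x = 0) (hy : mq n y = 0) (hyx : mq n (y - x) = 0) : ∃ t : ℝ, y = t • x := by
  let l : Fin n := ⟨n - 1, by omega⟩
  have hl : ∀ i : Fin n, (i : ℕ) = n - 1 → i = l := fun i hi => Fin.ext hi
  have hxl : x l ≠ 0 := fun h =>
    hx0 (eq_zero_of_mq_eq_zero_of_last hx fun i hi => by rw [hl i hi, h])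
  refine ⟨y l / x l, sub_eq_zero.1 (eq_zero_of_mq_eq_zero_of_last ?_ fun i hi => ?_)⟩
  · rw [mq_sub_smul, hx, hy, hyx]; ring
  · rw [hl i hi]
    simp [hxl]

lemma exists_isotropic {n : ℕ} (hn : 2 ≤ n) : ∃ x : Fin n → ℝ, x ≠ 0 ∧ mq n x = 0 := by
  obtain ⟨m, rfl⟩ : ∃ m, n = m + 2 := ⟨n - 2, by omega⟩
  -- The sum of the first and the last standard basis vectors.
  refine ⟨fun i => if i = 0 ∨ i = Fin.last (m + 1) then 1 else 0, fun h => ?_, ?_⟩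
  · simpa using congrFun h 0
  · rw [mq, Fin.sum_univ_succ, Fin.sum_univ_castSucc]
    have h : ∀ i : Fin m, i.castSucc.succ ≠ Fin.last (m + 1) := fun i hi => by
      have := congrArg Fin.val hi
      simp at this
      omega
    simp [h]

lemma isCoherentSet_line {n : ℕ} (a : Fin n → ℝ) {x : Fin n → ℝ} (hx : mq n x = 0) :
    IsCoherentSet n {y : Fin n → ℝ | ∃ t : ℝ, y = a + t • x} := by
  rintro _ ⟨s, rfl⟩ _ ⟨t, rfl⟩
  rw [add_sub_add_left_eq_sub, ← sub_smul, mq_smul, hx, mul_zero]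

lemma IsCoherentSet.subset_line {n : ℕ} (hn : 2 ≤ n) {T : Set (Fin n → ℝ)}
    (hT : IsCoherentSet n T) {a x : Fin n → ℝ} (hx0 : x ≠ 0) (ha : a ∈ T) (hax : a + x ∈ T) :
    T ⊆ {y : Fin n → ℝ | ∃ t : ℝ, y = a + t • x} := by
  intro y hy
  have hx : mq n x = 0 := by simpa using hT _ hax _ ha
  have hyx : mq n (y - a - x) = 0 := by simpa [sub_sub] using hT _ hy _ hax
  obtain ⟨t, ht⟩ := exists_smul_of_isotropic hn hx0 hx (hT _ hy _ ha) hyx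
  exact ⟨t, by rw [← ht]; abel⟩

lemma IsCoherentSet.exists_subset_line {n : ℕ} (hn : 2 ≤ n) {S : Set (Fin n → ℝ)}
    (hS : IsCoherentSet n S) : ∃ a x : Fin n → ℝ, x ≠ 0 ∧ mq n x = 0 ∧
      S ⊆ {y : Fin n → ℝ | ∃ t : ℝ, y = a + t • x} := by
  rcases S.subsingleton_or_nontrivial with h | ⟨a, ha, b, hb, hab⟩
  · obtain ⟨x, hx0, hx⟩ := exists_isotropic hn
    rcases h.eq_empty_or_singleton with rfl | ⟨a, rfl⟩
    · exact ⟨0, x, hx0, hx, Set.empty_subset _⟩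
    · exact ⟨a, x, hx0, hx, Set.singleton_subset_iff.2 ⟨0, by simp⟩⟩
  · have hba : b - a ≠ 0 := sub_ne_zero.2 hab.symm
    exact ⟨a, b - a, hba, hS b hb a ha, hS.subset_line hn hba ha (by simpa using hb)⟩

theorem maximal_coherent_sets_are_coherent_lines
    (n : ℕ) (hn : 2 ≤ n) (S : Set (Fin n → ℝ)) :
    (IsCoherentSet n S ∧
       ∀ T : Set (Fin n → ℝ), IsCoherentSet n T → S ⊆ T → S = T) ↔
    (∃ (a x : Fin n → ℝ), x ≠ 0 ∧ mq n x = 0 ∧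
       S = {y : Fin n → ℝ | ∃ t : ℝ, y = a + t • x}) := by
  constructor
  · rintro ⟨hS, hmax⟩
    obtain ⟨a, x, hx0, hx, hsub⟩ := hS.exists_subset_line hn
    exact ⟨a, x, hx0, hx, hmax _ (isCoherentSet_line a hx) hsub⟩
  · rintro ⟨a, x, hx0, hx, rfl⟩
    refine ⟨isCoherentSet_line a hx, fun T hT hsub => hsub.antisymm ?_⟩
    exact hT.subset_line hn hx0 (hsub ⟨0, by simp⟩) (hsub ⟨1, by simp⟩)
end

section
/- Let n ≥ 2 and let q(x₁,…,xₙ) = xₙ² − (x₁² + ⋯ + x_{n−1}²) on ℝⁿ. For every norm N on ℝⁿ (a map N : ℝⁿ → ℝ satisfying N(x) = 0 iff x = 0, N(t·x) = |t|·N(x), and N(x+y) ≤ N(x)+N(y)) there exists a constant M > 0 such that for all x, y ∈ ℝⁿ there exists z ∈ ℝⁿ with q(z−x) = 0, q(z−y) = 0, and N(z−x) ≤ M·N(y−x). -/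
lemma mq_succ (k : ℕ) (x : Fin (k + 1) → ℝ) :
    mq (k + 1) x = x (Fin.last k) ^ 2 - ∑ i : Fin k, x i.castSucc ^ 2 := by
  have h : ∀ i : Fin k, (i : ℕ) ≠ k := fun i => i.isLt.ne
  simp [mq, Fin.sum_univ_castSucc, h]
  ring

/-- Polar decomposition `a = r u`; for `a = 0` any unit vector `u` serves, which needs `0 < k`. -/
lemma exists_polar (k : ℕ) (hk : 0 < k) (a : Fin k → ℝ) :
    ∃ (r : ℝ) (u : Fin k → ℝ), 0 ≤ r ∧ r ^ 2 = ∑ i, a i ^ 2 ∧ ∑ i, u i ^ 2 = 1 ∧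
      ∀ i, a i = r * u i := by
  have hS : 0 ≤ ∑ i, a i ^ 2 := Finset.sum_nonneg fun i _ => sq_nonneg _
  rcases hS.eq_or_lt with h0 | h0
  · refine ⟨0, Pi.single ⟨0, hk⟩ 1, le_rfl, by simpa using h0, ?_, fun i => ?_⟩
    · simp [Pi.single_apply, ite_pow]
    · have := (Finset.sum_eq_zero_iff_of_nonneg fun i _ => sq_nonneg (a i)).1 h0.symm i
        (Finset.mem_univ i)
      simpa using this
  · have hr := Real.sqrt_pos.2 h0
    refine ⟨√(∑ i, a i ^ 2), fun i => a i / √(∑ i, a i ^ 2), hr.le, Real.sq_sqrt hS, ?_,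
      fun i => by field_simp⟩
    simp only [div_pow]
    rw [← Finset.sum_div, Real.sq_sqrt hS, div_self (ne_of_gt h0)]

/-- Every vector `v` is the sum of two null vectors `w` and `v - w`, with `w` controlled by `v`. -/
lemma exists_null_decomp (k : ℕ) (hk : 0 < k) (v : Fin (k + 1) → ℝ) :
    ∃ w : Fin (k + 1) → ℝ, mq (k + 1) w = 0 ∧ mq (k + 1) (w - v) = 0 ∧
      ‖w‖ ≤ (k + 1) * ‖v‖ := by
  obtain ⟨r, u, hr, hr2, hu, hv⟩ := exists_polar k hk fun i => v i.castSucc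
  set t := v (Fin.last k) with ht
  have hvi : ∀ i, |v i| ≤ ‖v‖ := fun i => norm_le_pi_norm v i
  have hrv : r ≤ k * ‖v‖ := by
    have h1 : r ^ 2 ≤ k * ‖v‖ ^ 2 := by
      rw [hr2]
      calc ∑ i : Fin k, v i.castSucc ^ 2 ≤ ∑ _i : Fin k, ‖v‖ ^ 2 :=
            Finset.sum_le_sum fun i _ => by
              rw [← sq_abs]
              exact pow_le_pow_left₀ (abs_nonneg _) (hvi _) 2
        _ = k * ‖v‖ ^ 2 := by simp
    have hk1 : (1 : ℝ) ≤ k := by exact_mod_cast hk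
    refine le_of_sq_le_sq (h1.trans ?_) (by positivity)
    rw [mul_pow]
    exact mul_le_mul_of_nonneg_right (by nlinarith) (sq_nonneg _)
  have hs : |(r + t) / 2| ≤ (k + 1) * ‖v‖ := by
    have h2 := abs_le.1 (hvi (Fin.last k))
    rw [← ht] at h2
    rw [abs_le]
    constructor <;> nlinarith [norm_nonneg v]
  have hui : ∀ i, |u i| ≤ 1 := fun i => by
    rw [← sq_le_one_iff_abs_le_one, ← hu]
    exact Finset.single_le_sum (f := fun i => u i ^ 2) (fun i _ => sq_nonneg _)
      (Finset.mem_univ i)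
  refine ⟨Fin.snoc (fun i => (r + t) / 2 * u i) ((r + t) / 2), ?_, ?_, ?_⟩
  · simp only [mq_succ, Fin.snoc_last, Fin.snoc_castSucc, mul_pow, ← Finset.mul_sum, hu]
    ring
  · have hd : ∀ i : Fin k, (r + t) / 2 * u i - v i.castSucc = (t - r) / 2 * u i := fun i => by
      rw [hv i]
      ring
    simp only [mq_succ, Pi.sub_apply, Fin.snoc_last, Fin.snoc_castSucc, hd, mul_pow,
      ← Finset.mul_sum, hu, ← ht]
    ring
  · refine (pi_norm_le_iff_of_nonneg (by positivity)).2 fun i => ?_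
    refine Fin.lastCases ?_ (fun i => ?_) i
    · simpa only [Fin.snoc_last, Real.norm_eq_abs] using hs
    · rw [Fin.snoc_castSucc, Real.norm_eq_abs, abs_mul]
      exact (mul_le_of_le_one_right (abs_nonneg _) (hui i)).trans hs

/-- Equivalence of `N` with the sup norm: `N` is convex, hence continuous in finite dimension, and
so has a positive minimum on the unit sphere. -/
lemma norm_equiv_sup (n : ℕ) (N : (Fin n → ℝ) → ℝ)
    (hN0 : ∀ x : Fin n → ℝ, N x = 0 ↔ x = 0)
    (hNsmul : ∀ (t : ℝ) (x : Fin n → ℝ), N (t • x) = |t| * N x)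
    (hNadd : ∀ x y : Fin n → ℝ, N (x + y) ≤ N x + N y) :
    ∃ C m : ℝ, 0 < C ∧ 0 < m ∧ ∀ x, N x ≤ C * ‖x‖ ∧ m * ‖x‖ ≤ N x := by
  let p : Seminorm ℝ (Fin n → ℝ) := Seminorm.of N hNadd hNsmul
  have hpc : Continuous p := by
    rw [← continuousOn_univ]
    exact p.convexOn.continuousOn isOpen_univ
  obtain ⟨C, hC, hCb⟩ := p.bound_of_continuous_normedSpace hpc
  have hpos : ∀ x, x ≠ 0 → 0 < N x := fun x hx =>
    lt_of_le_of_ne (apply_nonneg p x) fun h => hx ((hN0 x).1 h.symm)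
  obtain ⟨m, hm, hmb⟩ : ∃ m : ℝ, 0 < m ∧ ∀ x ∈ Metric.sphere (0 : Fin n → ℝ) 1, m ≤ N x := by
    rcases (Metric.sphere (0 : Fin n → ℝ) 1).eq_empty_or_nonempty with he | hne
    · exact ⟨1, one_pos, by simp [he]⟩
    · obtain ⟨x₀, hx₀, hmin⟩ := (isCompact_sphere (0 : Fin n → ℝ) 1).exists_isMinOn hne
        hpc.continuousOn
      exact ⟨N x₀, hpos x₀ (ne_zero_of_mem_unit_sphere ⟨x₀, hx₀⟩), fun x hx => hmin hx⟩
  refine ⟨C, m, hC, hm, fun x => ⟨hCb x, ?_⟩⟩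
  rcases eq_or_ne x 0 with rfl | hx
  · simp [(hN0 0).2 rfl]
  · have hx' := norm_pos_iff.2 hx
    have h := hmb (‖x‖⁻¹ • x) (by simp [norm_smul, hx'.ne'])
    rw [hNsmul, abs_of_pos (inv_pos.2 hx'), inv_mul_eq_div, le_div_iff₀ hx'] at h
    exact h

theorem exists_close_common_coherent_point
    (n : ℕ) (hn : 2 ≤ n) (N : (Fin n → ℝ) → ℝ)
    (hN0 : ∀ x : Fin n → ℝ, N x = 0 ↔ x = 0)
    (hNsmul : ∀ (t : ℝ) (x : Fin n → ℝ), N (t • x) = |t| * N x)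
    (hNadd : ∀ x y : Fin n → ℝ, N (x + y) ≤ N x + N y) :
    ∃ M : ℝ, 0 < M ∧ ∀ x y : Fin n → ℝ, ∃ z : Fin n → ℝ,
      mq n (z - x) = 0 ∧ mq n (z - y) = 0 ∧ N (z - x) ≤ M * N (y - x) := by
  obtain ⟨C, m, hC, hm, hb⟩ := norm_equiv_sup n N hN0 hNsmul hNadd
  obtain ⟨k, rfl⟩ : ∃ k, n = k + 1 := ⟨n - 1, by omega⟩
  refine ⟨C * (k + 1) / m, by positivity, fun x y => ?_⟩
  obtain ⟨w, hw, hwv, hle⟩ := exists_null_decomp k (by omega) (y - x)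
  refine ⟨x + w, by simpa using hw, ?_, ?_⟩
  · rwa [show x + w - y = w - (y - x) by abel]
  · rw [add_sub_cancel_left]
    calc N w ≤ C * ‖w‖ := (hb w).1
      _ ≤ C * ((k + 1) * ‖y - x‖) := by gcongr
      _ = C * (k + 1) / m * (m * ‖y - x‖) := by field_simp
      _ ≤ C * (k + 1) / m * N (y - x) := by
        gcongr
        exact (hb _).2
end

section
/- Let n ≥ 4 and let q(x₁,…,xₙ) = xₙ² − (x₁² + ⋯ + x_{n−1}²) on ℝⁿ. Let a, b, c ∈ ℝⁿ satisfy q(a) = q(b) = q(c) = 0 and assume each of the pairs (a,b), (a,c), (b,c) is linearly independent. Then there exists d ∈ ℝⁿ with q(d) ≠ 0 and q(d−a) = q(d−b) = q(d−c) = 0. -/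
/-- The symmetric bilinear form whose associated quadratic form is `mq n`. -/
noncomputable def mqB (n : ℕ) : (Fin n → ℝ) →ₗ[ℝ] (Fin n → ℝ) →ₗ[ℝ] ℝ :=
  LinearMap.mk₂ ℝ
    (fun x y => ∑ i : Fin n, (if (i : ℕ) = n - 1 then (1 : ℝ) else -1) * (x i * y i))
    (fun x y z => by
      rw [← Finset.sum_add_distrib]
      exact Finset.sum_congr rfl fun i _ => by simp only [Pi.add_apply]; ring)
    (fun k x y => by
      rw [smul_eq_mul, Finset.mul_sum]
      exact Finset.sum_congr rfl fun i _ => by simp only [Pi.smul_apply, smul_eq_mul]; ring)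
    (fun x y z => by
      rw [← Finset.sum_add_distrib]
      exact Finset.sum_congr rfl fun i _ => by simp only [Pi.add_apply]; ring)
    (fun k x y => by
      rw [smul_eq_mul, Finset.mul_sum]
      exact Finset.sum_congr rfl fun i _ => by simp only [Pi.smul_apply, smul_eq_mul]; ring)

lemma mq_eq_mqB (n : ℕ) (x : Fin n → ℝ) : mq n x = mqB n x x := by
  simp only [mq, mqB, LinearMap.mk₂_apply]
  exact Finset.sum_congr rfl fun i _ => by ring

lemma mqB_comm (n : ℕ) (x y : Fin n → ℝ) : mqB n x y = mqB n y x := by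
  simp only [mqB, LinearMap.mk₂_apply]
  exact Finset.sum_congr rfl fun i _ => by ring

/-- `q` is negative definite on the hyperplane where the last coordinate vanishes. -/
lemma eq_zero_of_mq_of_last {n : ℕ} (m : Fin n) (hm : (m : ℕ) = n - 1) (x : Fin n → ℝ)
    (hx : mq n x = 0) (h0 : x m = 0) : x = 0 := by
  have h : ∑ i : Fin n, x i ^ 2 = 0 := by
    rw [← neg_eq_zero, ← hx, mq, ← Finset.sum_neg_distrib]
    refine Finset.sum_congr rfl fun i _ => ?_
    split_ifs with hi
    · have : i = m := Fin.ext (hi.trans hm.symm)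
      simp [this, h0]
    · ring
  rw [Finset.sum_eq_zero_iff_of_nonneg fun i _ => sq_nonneg _] at h
  funext i
  exact pow_eq_zero_iff two_ne_zero |>.1 (h i (Finset.mem_univ i))

/-- Two orthogonal null vectors are proportional: the combination of the two that kills the last
coordinate is again null, hence zero. -/
lemma mqB_null_orthogonal {n : ℕ} (hn : 4 ≤ n) (x y : Fin n → ℝ) (hx : mq n x = 0)
    (hy : mq n y = 0) (hx0 : x ≠ 0) (hxy : mqB n x y = 0) : ∃ k : ℝ, y = k • x := by
  let m : Fin n := ⟨n - 1, by omega⟩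
  have hxm : x m ≠ 0 := fun h => hx0 (eq_zero_of_mq_of_last m rfl x hx h)
  have hu : x m • y - y m • x = 0 := by
    apply eq_zero_of_mq_of_last m rfl
    · rw [mq_eq_mqB] at *
      simp [hx, hy, hxy, mqB_comm n y x]
    · simp [mul_comm]
  refine ⟨(x m)⁻¹ * y m, ?_⟩
  rw [mul_smul, ← sub_eq_zero.1 hu, smul_smul, inv_mul_cancel₀ hxm, one_smul]

lemma mqB_ne_zero {n : ℕ} (hn : 4 ≤ n) (x y : Fin n → ℝ) (hx : mq n x = 0)
    (hy : mq n y = 0) (h : LinearIndependent ℝ ![x, y]) : mqB n x y ≠ 0 := by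
  intro hxy
  have hx0 : x ≠ 0 := h.ne_zero 0
  obtain ⟨k, hk⟩ := mqB_null_orthogonal hn x y hx hy hx0 hxy
  rw [LinearIndependent.pair_iff' hx0] at h
  exact h k hk.symm

theorem exists_noncone_point_coherent_with_three
    (n : ℕ) (hn : 4 ≤ n) (a b c : Fin n → ℝ)
    (ha : mq n a = 0) (hb : mq n b = 0) (hc : mq n c = 0)
    (hab : LinearIndependent ℝ ![a, b]) (hac : LinearIndependent ℝ ![a, c])
    (hbc : LinearIndependent ℝ ![b, c]) :
    ∃ d : Fin n → ℝ, mq n d ≠ 0 ∧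
      mq n (d - a) = 0 ∧ mq n (d - b) = 0 ∧ mq n (d - c) = 0 := by
  have hp := mqB_ne_zero hn a b ha hb hab
  have hr := mqB_ne_zero hn a c ha hc hac
  have hs := mqB_ne_zero hn b c hb hc hbc
  have coherent : ∀ d e : Fin n → ℝ, mq n e = 0 → mq n d = 2 * mqB n d e →
      mq n (d - e) = 0 := by
    intro d e he hd
    rw [mq_eq_mqB] at *
    simp only [map_sub, LinearMap.sub_apply, mqB_comm n e d]
    linarith
  obtain ⟨w, hwa, hwb, hwc, x, y, z, hwe⟩ : ∃ w, mqB n w a = 1 ∧ mqB n w b = 1 ∧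
      mqB n w c = 1 ∧ ∃ x y z : ℝ, w = x • a + y • b + z • c := by
    have ha' := ha
    have hb' := hb
    have hc' := hc
    rw [mq_eq_mqB] at ha' hb' hc'
    have hba := mqB_comm n b a
    have hca := mqB_comm n c a
    have hcb := mqB_comm n c b
    generalize hpe : mqB n a b = p at *
    generalize hre : mqB n a c = r at *
    generalize hse : mqB n b c = s at *
    -- The coefficients solve the 3 × 3 Gram system, by Cramer's rule.
    refine ⟨((p + r - s) / (2 * p * r)) • a + ((p + s - r) / (2 * p * s)) • b
      + ((r + s - p) / (2 * r * s)) • c, ?_, ?_, ?_, _, _, _, rfl⟩ <;>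
    · simp only [map_add, map_smul, LinearMap.add_apply, LinearMap.smul_apply, smul_eq_mul,
        ha', hb', hc', hba, hca, hcb, hpe, hre, hse]
      field_simp
      ring
  by_cases hw : mq n w = 0
  · obtain ⟨v, hv, hv0⟩ := Submodule.exists_mem_ne_zero_of_ne_bot
      (LinearMap.ker_ne_bot_of_finrank_lt
        (f := LinearMap.pi ![mqB n a, mqB n b, mqB n c]) (by simp; omega))
    have hva : mqB n a v = 0 := congrFun hv 0
    have hvb : mqB n b v = 0 := congrFun hv 1
    have hvc : mqB n c v = 0 := congrFun hv 2
    have hqv : mq n v ≠ 0 := by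
      intro h
      obtain ⟨k, rfl⟩ := mqB_null_orthogonal hn a v ha h (hab.ne_zero 0) hva
      rw [map_smul, smul_eq_mul, mqB_comm n b a] at hvb
      rcases mul_eq_zero.1 hvb with hk | hk
      · exact hv0 (by rw [hk, zero_smul])
      · exact hp hk
    rw [mqB_comm] at hva hvb hvc
    have hvw : mqB n v w = 0 := by
      simp [hwe, hva, hvb, hvc]
    have hd : mq n ((mq n v / 2) • w + v) = mq n v := by
      rw [mq_eq_mqB n (_ + v)]
      simp only [map_add, map_smul, LinearMap.add_apply, LinearMap.smul_apply, smul_eq_mul,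
        ← mq_eq_mqB, hw, hvw, mqB_comm n w v]
      ring
    refine ⟨(mq n v / 2) • w + v, by rwa [hd], coherent _ _ ha ?_, coherent _ _ hb ?_,
      coherent _ _ hc ?_⟩ <;>
    · rw [hd]
      simp only [map_add, map_smul, LinearMap.add_apply, LinearMap.smul_apply, smul_eq_mul,
        hwa, hwb, hwc, hva, hvb, hvc]
      ring
  · have hd : mq n ((2 / mq n w) • w) = 4 / mq n w := by
      rw [mq_eq_mqB n (_ • w)]
      simp only [map_smul, LinearMap.smul_apply, smul_eq_mul, ← mq_eq_mqB]
      field_simp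
      norm_num
    refine ⟨(2 / mq n w) • w, by rw [hd]; positivity, coherent _ _ ha ?_, coherent _ _ hb ?_,
      coherent _ _ hc ?_⟩ <;>
    · rw [hd]
      simp only [map_smul, LinearMap.smul_apply, smul_eq_mul, hwa, hwb, hwc]
      ring
end

section
/- Let φ : ℝ⁴ → ℝ⁴ be an arbitrary map. The following are equivalent. (a) φ is continuous, satisfies ⟨φ(r₁)−φ(r₂), φ(r₁)−φ(r₂)⟩ = 0 whenever ⟨r₁−r₂, r₁−r₂⟩ = 0, and its range is contained in some light cone. (b) There exist a countable set J, a family (U_j)_{j∈J} of pairwise disjoint open subsets of ℝ⁴, a family (s_j)_{j∈J} of elements of 𝒬, a point s′ ∈ ℝ⁴, and a continuous map f : ℝ⁴ → ℝ such that: (i) for all distinct j, j′ in J and all r ∈ U_j, r′ ∈ U_{j′}, ⟨r−r′, r−r′⟩ ≠ 0; (ii) f vanishes everywhere on the complement of ⋃_{j∈J} U_j; (iii) for all r ∈ ℝ⁴, φ(r) = s′ + f(r)·s_j if r ∈ U_j for some j ∈ J, and φ(r) = s′ otherwise. -/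
/-!
A map with range in the light cone at `s'` can be written `φ r = s' + f r • d r`, where `f` is the
time coordinate of `φ r - s'` and, wherever `f ≠ 0`, the direction `d r` lies in `QSet4`. Two
nonzero null vectors whose difference is null are parallel, so `d` takes equal values at coherent
points of `{f ≠ 0}`. Every vector is a sum of two null vectors of comparable size
(`exists_null_decomposition`), so nearby points of the open set `{f ≠ 0}` are joined within it by a
two-step lightlike path; hence `d` is locally constant there. The sets `U j` are its nonempty
level sets, indexed by the directions themselves; there are countably many, being disjoint
nonempty open subsets of a separable space.

For the converse, only continuity at points outside `⋃ j, U j` needs an argument: it follows from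
`‖φ r - s'‖ ≤ |f r|`.
-/

/-- The Lorentz–Minkowski inner product on `ℝ⁴`. -/
noncomputable def lorentzMink (r s : Fin 4 → ℝ) : ℝ :=
  -(r 0 * s 0) - r 1 * s 1 - r 2 * s 2 + r 3 * s 3

/-- The set `𝒬 = {(x,y,z,1) : x² + y² + z² = 1}`. -/
def QSet4 : Set (Fin 4 → ℝ) :=
  {p | p 3 = 1 ∧ p 0 ^ 2 + p 1 ^ 2 + p 2 ^ 2 = 1}

/-- In the plane spanned by the time axis and `v`, a vector splits along the two null lines; the
constant `2` is crude: the spatial length is at most `3 ‖v‖`, the time coordinate at most `‖v‖`,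
and the coefficient of the null vector is half their sum. -/
lemma exists_null_decomposition (v : Fin 4 → ℝ) :
    ∃ w : Fin 4 → ℝ, lorentzMink w w = 0 ∧ lorentzMink (v - w) (v - w) = 0 ∧ ‖w‖ ≤ 2 * ‖v‖ := by
  obtain ⟨ρ, n₀, n₁, n₂, hρ, hn, h₀, h₁, h₂⟩ : ∃ ρ n₀ n₁ n₂ : ℝ, 0 ≤ ρ ∧
      n₀ ^ 2 + n₁ ^ 2 + n₂ ^ 2 = 1 ∧ v 0 = ρ * n₀ ∧ v 1 = ρ * n₁ ∧ v 2 = ρ * n₂ := by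
    have hnn : 0 ≤ v 0 ^ 2 + v 1 ^ 2 + v 2 ^ 2 := by positivity
    have hsq := Real.sq_sqrt hnn
    have hs0 := Real.sqrt_nonneg (v 0 ^ 2 + v 1 ^ 2 + v 2 ^ 2)
    generalize Real.sqrt (v 0 ^ 2 + v 1 ^ 2 + v 2 ^ 2) = ρ at hsq hs0
    by_cases h : ρ = 0
    · subst h
      refine ⟨0, 1, 0, 0, le_rfl, by norm_num, ?_, ?_, ?_⟩ <;> nlinarith
    · refine ⟨ρ, v 0 / ρ, v 1 / ρ, v 2 / ρ, hs0, ?_, ?_, ?_, ?_⟩ <;> field_simp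
      linarith
  have b0 := abs_le.1 (norm_le_pi_norm v 0)
  have b1 := abs_le.1 (norm_le_pi_norm v 1)
  have b2 := abs_le.1 (norm_le_pi_norm v 2)
  have b3 := abs_le.1 (norm_le_pi_norm v 3)
  have hN := norm_nonneg v
  have hρle : ρ ≤ 3 * ‖v‖ := by
    have : ρ ^ 2 = v 0 ^ 2 + v 1 ^ 2 + v 2 ^ 2 := by
      rw [h₀, h₁, h₂]; linear_combination -ρ ^ 2 * hn
    have c0 : v 0 ^ 2 ≤ ‖v‖ ^ 2 := sq_le_sq' b0.1 b0.2
    have c1 : v 1 ^ 2 ≤ ‖v‖ ^ 2 := sq_le_sq' b1.1 b1.2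
    have c2 : v 2 ^ 2 ≤ ‖v‖ ^ 2 := sq_le_sq' b2.1 b2.2
    exact abs_le_of_sq_le_sq' (by nlinarith) (by positivity) |>.2
  have ha : |(ρ + v 3) / 2| ≤ 2 * ‖v‖ := abs_le.2 ⟨by linarith, by linarith⟩
  have hmul : ∀ x : ℝ, x ^ 2 ≤ 1 → |(ρ + v 3) / 2 * x| ≤ 2 * ‖v‖ := fun x hx => by
    rw [abs_mul]
    have hx1 : |x| ≤ 1 := (sq_le_one_iff_abs_le_one x).1 hx
    nlinarith [abs_nonneg ((ρ + v 3) / 2), abs_nonneg x]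
  refine ⟨((ρ + v 3) / 2) • ![n₀, n₁, n₂, 1], ?_, ?_, ?_⟩
  · simp [lorentzMink]
    linear_combination (-((ρ + v 3) / 2) ^ 2) * hn
  · simp [lorentzMink, h₀, h₁, h₂]
    linear_combination (-((ρ - v 3) / 2) ^ 2) * hn
  · rw [pi_norm_le_iff_of_nonneg (by positivity)]
    intro i
    rw [Real.norm_eq_abs]
    fin_cases i
    · exact hmul n₀ (by nlinarith [sq_nonneg n₁, sq_nonneg n₂])
    · exact hmul n₁ (by nlinarith [sq_nonneg n₀, sq_nonneg n₂])
    · exact hmul n₂ (by nlinarith [sq_nonneg n₀, sq_nonneg n₁])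
    · exact hmul 1 (by norm_num)

/-- Null vectors with null difference are parallel: the hypothesis forces `⟨p, q⟩ = 0`, and on
`QSet4` the Euclidean distance satisfies `|p - q|² = 2 ⟨p, q⟩`. -/
lemma direction_eq {p q : Fin 4 → ℝ} (hp : p ∈ QSet4) (hq : q ∈ QSet4) {a b : ℝ} (ha : a ≠ 0)
    (hb : b ≠ 0) (h : lorentzMink (a • p - b • q) (a • p - b • q) = 0) : p = q := by
  obtain ⟨hp3, hp⟩ := hp
  obtain ⟨hq3, hq⟩ := hq
  simp only [lorentzMink, Pi.sub_apply, Pi.smul_apply, smul_eq_mul, hp3, hq3] at h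
  have hab : (a * b) * (1 - p 0 * q 0 - p 1 * q 1 - p 2 * q 2) = 0 := by
    linear_combination (-1 / 2) * h - a ^ 2 / 2 * hp - b ^ 2 / 2 * hq
  have h0 := (mul_eq_zero.1 hab).resolve_left (mul_ne_zero ha hb)
  have hs : (p 0 - q 0) ^ 2 + (p 1 - q 1) ^ 2 + (p 2 - q 2) ^ 2 = 0 := by
    linear_combination hp + hq + 2 * h0
  funext i
  fin_cases i
  · change p 0 = q 0
    nlinarith [sq_nonneg (p 0 - q 0), sq_nonneg (p 1 - q 1), sq_nonneg (p 2 - q 2)]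
  · change p 1 = q 1
    nlinarith [sq_nonneg (p 0 - q 0), sq_nonneg (p 1 - q 1), sq_nonneg (p 2 - q 2)]
  · change p 2 = q 2
    nlinarith [sq_nonneg (p 0 - q 0), sq_nonneg (p 1 - q 1), sq_nonneg (p 2 - q 2)]
  · exact hp3.trans hq3.symm

lemma lorentzMink_smul_self {p : Fin 4 → ℝ} (hp : p ∈ QSet4) (a : ℝ) :
    lorentzMink (a • p) (a • p) = 0 := by
  obtain ⟨hp3, hp⟩ := hp
  simp only [lorentzMink, Pi.smul_apply, smul_eq_mul, hp3]
  linear_combination -a ^ 2 * hp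

lemma norm_le_one_of_mem_QSet4 {p : Fin 4 → ℝ} (hp : p ∈ QSet4) : ‖p‖ ≤ 1 := by
  obtain ⟨hp3, hp⟩ := hp
  rw [pi_norm_le_iff_of_nonneg zero_le_one]
  intro i
  rw [Real.norm_eq_abs, ← sq_le_one_iff_abs_le_one]
  fin_cases i
  · change p 0 ^ 2 ≤ 1
    nlinarith [sq_nonneg (p 1), sq_nonneg (p 2)]
  · change p 1 ^ 2 ≤ 1
    nlinarith [sq_nonneg (p 0), sq_nonneg (p 2)]
  · change p 2 ^ 2 ≤ 1
    nlinarith [sq_nonneg (p 0), sq_nonneg (p 1)]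
  · change p 3 ^ 2 ≤ 1
    rw [hp3]; norm_num

lemma lorentzMink_sub_comm (p q : Fin 4 → ℝ) :
    lorentzMink (p - q) (p - q) = lorentzMink (q - p) (q - p) := by
  simp only [lorentzMink, Pi.sub_apply]; ring

/-- A nonzero null vector rescaled to time coordinate `1` lies in `QSet4`. -/
lemma inv_smul_mem_QSet4 {p : Fin 4 → ℝ} (hp : lorentzMink p p = 0) (h3 : p 3 ≠ 0) :
    (p 3)⁻¹ • p ∈ QSet4 := by
  simp only [lorentzMink] at hp
  constructor
  · simp [h3]
  · simp only [Pi.smul_apply, smul_eq_mul]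
    field_simp
    linarith

/-- A null vector with zero time coordinate vanishes. -/
lemma eq_zero_of_null {p : Fin 4 → ℝ} (hp : lorentzMink p p = 0) (h3 : p 3 = 0) : p = 0 := by
  simp only [lorentzMink, h3] at hp
  funext i
  fin_cases i
  · change p 0 = 0
    nlinarith [sq_nonneg (p 0), sq_nonneg (p 1), sq_nonneg (p 2)]
  · change p 1 = 0
    nlinarith [sq_nonneg (p 0), sq_nonneg (p 1), sq_nonneg (p 2)]
  · change p 2 = 0
    nlinarith [sq_nonneg (p 0), sq_nonneg (p 1), sq_nonneg (p 2)]
  · exact h3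

theorem degenerate_continuous_coherency_preserver_characterization
    (φ : (Fin 4 → ℝ) → (Fin 4 → ℝ)) :
    (Continuous φ ∧
     (∀ r₁ r₂ : Fin 4 → ℝ, lorentzMink (r₁ - r₂) (r₁ - r₂) = 0 →
        lorentzMink (φ r₁ - φ r₂) (φ r₁ - φ r₂) = 0) ∧
     (∃ s' : Fin 4 → ℝ, ∀ r : Fin 4 → ℝ,
        lorentzMink (φ r - s') (φ r - s') = 0)) ↔
    (∃ (J : Type) (_ : Countable J) (U : J → Set (Fin 4 → ℝ))
       (s : J → (Fin 4 → ℝ)) (s' : Fin 4 → ℝ) (f : (Fin 4 → ℝ) → ℝ),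
       (∀ j : J, IsOpen (U j)) ∧
       (Pairwise fun j j' : J => Disjoint (U j) (U j')) ∧
       (∀ j : J, s j ∈ QSet4) ∧
       Continuous f ∧
       (∀ j j' : J, j ≠ j' → ∀ r ∈ U j, ∀ r' ∈ U j',
          lorentzMink (r - r') (r - r') ≠ 0) ∧
       (∀ r : Fin 4 → ℝ, r ∉ (⋃ j : J, U j) → f r = 0) ∧
       (∀ (j : J), ∀ r ∈ U j, φ r = s' + f r • s j) ∧
       (∀ r : Fin 4 → ℝ, r ∉ (⋃ j : J, U j) → φ r = s')) := by
  constructor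
  · rintro ⟨hc, hcoh, s', hs'⟩
    let f : (Fin 4 → ℝ) → ℝ := fun r => (φ r - s') 3
    let d : (Fin 4 → ℝ) → (Fin 4 → ℝ) := fun r => (f r)⁻¹ • (φ r - s')
    have hf : Continuous f := by fun_prop
    have hdQ : ∀ r, f r ≠ 0 → d r ∈ QSet4 := fun r hr => inv_smul_mem_QSet4 (hs' r) hr
    have hfd : ∀ r, f r ≠ 0 → f r • d r = φ r - s' := fun r hr => smul_inv_smul₀ hr _
    have hdeq : ∀ r r', f r ≠ 0 → f r' ≠ 0 → lorentzMink (r - r') (r - r') = 0 → d r = d r' := by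
      intro r r' hr hr' h
      refine direction_eq (hdQ r hr) (hdQ r' hr') hr hr' ?_
      rw [hfd r hr, hfd r' hr', sub_sub_sub_cancel_right]
      exact hcoh r r' h
    have hopen : ∀ q, IsOpen {r | f r ≠ 0 ∧ d r = q} := by
      intro q
      rw [Metric.isOpen_iff]
      rintro r ⟨hr, rfl⟩
      obtain ⟨ε, hε, hball⟩ := Metric.isOpen_iff.1 (isOpen_ne_fun hf continuous_const) r hr
      -- The intermediate point of the lightlike path stays within twice the distance.
      refine ⟨ε / 2, by positivity, fun x hx => ?_⟩
      rw [Metric.mem_ball, dist_eq_norm] at hx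
      obtain ⟨w, hw, hvw, hwn⟩ := exists_null_decomposition (x - r)
      have hxU : f x ≠ 0 := hball (by rw [Metric.mem_ball, dist_eq_norm]; linarith)
      have hmU : f (r + w) ≠ 0 := hball (by
        rw [Metric.mem_ball, dist_eq_norm, add_sub_cancel_left]; linarith)
      refine ⟨hxU, (hdeq x (r + w) hxU hmU ?_).trans (hdeq (r + w) r hmU hr ?_)⟩
      · rwa [← sub_sub]
      · rwa [add_sub_cancel_left]
    let D : Set (Fin 4 → ℝ) := d '' {r | f r ≠ 0}
    have hdisj : ∀ q q', q ≠ q' →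
        Disjoint {r | f r ≠ 0 ∧ d r = q} {r | f r ≠ 0 ∧ d r = q'} := fun q q' hne =>
      Set.disjoint_left.2 fun r hr hr' => hne (hr.2.symm.trans hr'.2)
    have hD : D.Countable := by
      refine Set.PairwiseDisjoint.countable_of_isOpen
        (s := fun q => {r | f r ≠ 0 ∧ d r = q}) (fun q _ q' _ hne => hdisj q q' hne)
        (fun q _ => hopen q) ?_
      rintro q ⟨r, hr, rfl⟩
      exact ⟨r, hr, rfl⟩
    have hout : ∀ r, r ∉ (⋃ j : D, {r | f r ≠ 0 ∧ d r = j.1}) → f r = 0 := by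
      intro r hr
      by_contra h
      exact hr (Set.mem_iUnion.2 ⟨⟨d r, r, h, rfl⟩, h, rfl⟩)
    refine ⟨D, hD.to_subtype, fun j => {r | f r ≠ 0 ∧ d r = j.1}, fun j => j.1, s', f,
      fun j => hopen j.1, fun j j' hne => hdisj _ _ fun h => hne (Subtype.ext h), ?_, hf, ?_,
      hout, ?_, fun r hr => sub_eq_zero.1 (eq_zero_of_null (hs' r) (hout r hr))⟩
    · rintro ⟨_, r, hr, rfl⟩
      exact hdQ r hr
    · rintro j j' hne r ⟨hr, hrj⟩ r' ⟨hr', hrj'⟩ h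
      exact hne (Subtype.ext (hrj.symm.trans ((hdeq r r' hr hr' h).trans hrj')))
    · rintro j r ⟨hr, hrj⟩
      change φ r = s' + f r • j.1
      rw [← hrj, hfd r hr, add_sub_cancel]
  · rintro ⟨J, _, U, s, s', f, hU, -, hs, hf, hi, hf0, hφ, hφ0⟩
    have hnull : ∀ r, lorentzMink (φ r - s') (φ r - s') = 0 := by
      intro r
      by_cases h : r ∈ ⋃ j, U j
      · obtain ⟨j, hj⟩ := Set.mem_iUnion.1 h
        rw [hφ j r hj, add_sub_cancel_left]
        exact lorentzMink_smul_self (hs j) _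
      · rw [hφ0 r h]; simp [lorentzMink]
    have hbound : ∀ r, ‖φ r - s'‖ ≤ |f r| := by
      intro r
      by_cases h : r ∈ ⋃ j, U j
      · obtain ⟨j, hj⟩ := Set.mem_iUnion.1 h
        rw [hφ j r hj, add_sub_cancel_left, norm_smul, Real.norm_eq_abs]
        exact mul_le_of_le_one_right (abs_nonneg _) (norm_le_one_of_mem_QSet4 (hs j))
      · rw [hφ0 r h]; simp
    refine ⟨continuous_iff_continuousAt.2 fun r => ?_, fun r r' h => ?_, s', hnull⟩
    · by_cases h : r ∈ ⋃ j, U j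
      · obtain ⟨j, hj⟩ := Set.mem_iUnion.1 h
        have hcj : Continuous fun x => s' + f x • s j := by fun_prop
        refine hcj.continuousAt.congr ?_
        filter_upwards [(hU j).mem_nhds hj] with x hx using (hφ j x hx).symm
      · rw [ContinuousAt, hφ0 r h, tendsto_iff_norm_sub_tendsto_zero]
        refine squeeze_zero (fun x => norm_nonneg _) hbound ?_
        have := (hf.abs).tendsto r
        rwa [hf0 r h, abs_zero] at this
    · by_cases h1 : r ∈ ⋃ j, U j
      · by_cases h2 : r' ∈ ⋃ j, U j
        · obtain ⟨j, hj⟩ := Set.mem_iUnion.1 h1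
          obtain ⟨j', hj'⟩ := Set.mem_iUnion.1 h2
          obtain rfl : j = j' := by
            by_contra hne
            exact hi j j' hne r hj r' hj' h
          rw [hφ j r hj, hφ j r' hj', add_sub_add_left_eq_sub, ← sub_smul]
          exact lorentzMink_smul_self (hs j) _
        · rw [hφ0 r' h2]; exact hnull r
      · rw [hφ0 r h1, lorentzMink_sub_comm]; exact hnull r'
end

section
/- Let n ≥ 4 and let φ : ℝⁿ → ℝⁿ be a continuous, non-degenerate coherency preserver for the form q(x₁,…,xₙ) = xₙ² − (x₁² + ⋯ + x_{n−1}²). Then for every a ∈ ℝⁿ and every p ∈ 𝒬 there exists a unique p′ ∈ 𝒬 such that φ(a + t·p) ∈ φ(a) + ℝ·p′ for every t ∈ ℝ. -/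
/-- The set `𝒬 = {(x₁,…,x_{n−1},1) : x₁² + ⋯ + x_{n−1}² = 1}` in `ℝⁿ`. -/
def QSet (n : ℕ) : Set (Fin n → ℝ) :=
  {p | (∀ i : Fin n, (i : ℕ) = n - 1 → p i = 1) ∧
       (∑ i : Fin n, if (i : ℕ) = n - 1 then 0 else p i ^ 2) = 1}

/-- The symmetric bilinear form with `mbil l x x = mq n x`, `l` being the index of the last
coordinate. -/
def mbil {n : ℕ} (l : Fin n) (x y : Fin n → ℝ) : ℝ := 2 * (x l * y l) - x ⬝ᵥ y

lemma mq_eq {n : ℕ} (l : Fin n) (hl : (l : ℕ) = n - 1) (x : Fin n → ℝ) :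
    mq n x = mbil l x x := by
  have h : ∀ i : Fin n, (if (i : ℕ) = n - 1 then (1 : ℝ) else -1) * x i ^ 2
      = (if i = l then 2 * (x i * x i) else 0) - x i * x i := by
    intro i
    have : (i : ℕ) = n - 1 ↔ i = l := by rw [← hl, Fin.ext_iff]
    simp only [this]
    split_ifs <;> ring
  simp [mq, mbil, dotProduct, h, Finset.sum_sub_distrib]

lemma mem_QSet_iff {n : ℕ} (l : Fin n) (hl : (l : ℕ) = n - 1) (p : Fin n → ℝ) :
    p ∈ QSet n ↔ p l = 1 ∧ mbil l p p = 0 := by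
  have hi : ∀ i : Fin n, (i : ℕ) = n - 1 ↔ i = l := fun i => by rw [← hl, Fin.ext_iff]
  have h : ∀ i : Fin n, (if i = l then 0 else p i ^ 2)
      = p i * p i - (if i = l then p i * p i else 0) := by
    intro i
    split_ifs <;> ring
  simp only [QSet, Set.mem_ofPred_eq, hi, forall_eq, h, Finset.sum_sub_distrib, mbil, dotProduct,
    Finset.sum_ite_eq', Finset.mem_univ, if_true]
  constructor
  · rintro ⟨h1, h2⟩
    refine ⟨h1, ?_⟩
    rw [h1] at h2 ⊢
    linarith
  · rintro ⟨h1, h2⟩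
    refine ⟨h1, ?_⟩
    rw [h1] at h2 ⊢
    linarith

lemma mbil_comb {n : ℕ} (l : Fin n) (x y : Fin n → ℝ) (s t : ℝ) :
    mbil l (s • x - t • y) (s • x - t • y)
      = s ^ 2 * mbil l x x - 2 * s * t * mbil l x y + t ^ 2 * mbil l y y := by
  simp only [mbil, sub_dotProduct, dotProduct_sub, smul_dotProduct, dotProduct_smul,
    Pi.sub_apply, Pi.smul_apply, smul_eq_mul, dotProduct_comm y x]
  ring

/-- The form is negative definite on the hyperplane where the last coordinate vanishes. -/
lemma eq_zero_of_null_s11 {n : ℕ} (l : Fin n) (x : Fin n → ℝ) (hl : x l = 0)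
    (hx : mbil l x x = 0) : x = 0 := by
  have : x ⬝ᵥ x = 0 := by
    simp only [mbil, hl] at hx
    linarith
  exact dotProduct_self_eq_zero.mp this

lemma null_parallel {n : ℕ} (l : Fin n) (u v : Fin n → ℝ) (hu : mbil l u u = 0)
    (hv : mbil l v v = 0) (huv : mbil l (u - v) (u - v) = 0) : u l • v = v l • u := by
  have hB : mbil l v u = 0 := by
    have h := mbil_comb l v u 1 1
    have h' := mbil_comb l u v 1 1
    simp only [one_smul] at h h'
    have hs : mbil l v u = mbil l u v := by
      simp only [mbil, dotProduct_comm v u]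
      ring
    linarith
  refine sub_eq_zero.mp (eq_zero_of_null_s11 l _ ?_ ?_)
  · simp [mul_comm]
  · rw [mbil_comb, hu, hv, hB]
    ring

/-- A continuous coherency preserver that is constant on a null line is degenerate. -/
lemma const_line_degenerate {n : ℕ} (l : Fin n) (φ : (Fin n → ℝ) → (Fin n → ℝ))
    (hcont : Continuous φ)
    (hpres : ∀ a b : Fin n → ℝ, mbil l (b - a) (b - a) = 0 →
      mbil l (φ b - φ a) (φ b - φ a) = 0)
    (a p : Fin n → ℝ) (hpl : p l = 1) (hp : mbil l p p = 0)
    (hc : ∀ t : ℝ, φ (a + t • p) = φ a) (x : Fin n → ℝ) :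
    mbil l (φ x - φ a) (φ x - φ a) = 0 := by
  have key : ∀ y : Fin n → ℝ, mbil l (y - a) p ≠ 0 →
      mbil l (φ y - φ a) (φ y - φ a) = 0 := by
    intro y hy
    -- `q (y - a - t p) = q (y - a) - 2 t ⟨y - a, p⟩` is affine in `t`; this `t` is its root
    set t := mbil l (y - a) (y - a) / (2 * mbil l (y - a) p) with ht
    rw [← hc t]
    apply hpres
    have h := mbil_comb l (y - a) p 1 t
    rw [one_smul, hp] at h
    rw [← sub_sub, h, ht]
    field_simp
    ring
  by_cases hx : mbil l (x - a) p = 0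
  -- on the hyperplane, `x` is a limit of the points `x + ε e_l`, which lie off it for `ε ≠ 0`
  · have hoff : ∀ ε : ℝ, mbil l (x + ε • Pi.single l 1 - a) p = ε := by
      intro ε
      have : x + ε • Pi.single l 1 - a = (x - a) + ε • Pi.single l (1 : ℝ) := by abel
      rw [this]
      simp only [mbil] at hx ⊢
      simp only [add_dotProduct, smul_dotProduct, single_dotProduct, Pi.add_apply,
        Pi.smul_apply, Pi.single_eq_same, smul_eq_mul, hpl] at hx ⊢
      linarith
    let g : ℝ → ℝ := fun ε =>
      mbil l (φ (x + ε • Pi.single l 1) - φ a) (φ (x + ε • Pi.single l 1) - φ a)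
    have hg : Continuous g := by
      simp only [g, mbil, dotProduct]
      fun_prop
    have h0 : g = fun _ => 0 := by
      refine Continuous.ext_on (dense_compl_singleton (0 : ℝ)) hg continuous_const ?_
      intro ε hε
      exact key _ (by rw [hoff]; exact hε)
    simpa [g] using congrFun h0 0
  · exact key x hx

theorem exists_unique_induced_direction
    (n : ℕ) (hn : 4 ≤ n) (φ : (Fin n → ℝ) → (Fin n → ℝ))
    (hcont : Continuous φ)
    (hpres : ∀ a b : Fin n → ℝ, mq n (b - a) = 0 → mq n (φ b - φ a) = 0)
    (hnd : ¬ ∃ s' : Fin n → ℝ, ∀ x : Fin n → ℝ, mq n (φ x - s') = 0) :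
    ∀ a : Fin n → ℝ, ∀ p ∈ QSet n, ∃! p' : Fin n → ℝ,
      p' ∈ QSet n ∧ ∀ t : ℝ, ∃ s : ℝ, φ (a + t • p) = φ a + s • p' := by
  intro a p hpQ
  let l : Fin n := ⟨n - 1, by omega⟩
  have hl : (l : ℕ) = n - 1 := rfl
  simp only [mq_eq l hl] at hpres hnd
  simp only [mem_QSet_iff l hl] at hpQ ⊢
  obtain ⟨hpl, hp⟩ := hpQ
  obtain ⟨t₀, ht₀⟩ : ∃ t : ℝ, φ (a + t • p) ≠ φ a := by
    by_contra! hc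
    exact hnd ⟨φ a, const_line_degenerate l φ hcont hpres a p hpl hp hc⟩
  have hline : ∀ s t : ℝ, mbil l (φ (a + s • p) - φ (a + t • p))
      (φ (a + s • p) - φ (a + t • p)) = 0 := by
    intro s t
    apply hpres
    rw [add_sub_add_left_eq_sub, mbil_comb, hp]
    ring
  have hline0 : ∀ s : ℝ, mbil l (φ (a + s • p) - φ a) (φ (a + s • p) - φ a) = 0 := by
    intro s
    simpa using hline s 0
  set u := φ (a + t₀ • p) - φ a with hu
  have hu0 : u ≠ 0 := sub_ne_zero.mpr ht₀
  have hul : u l ≠ 0 := fun h => hu0 (eq_zero_of_null_s11 l u h (hline0 t₀))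
  refine ⟨(u l)⁻¹ • u, ⟨⟨by simp [hul], ?_⟩, ?_⟩, ?_⟩
  · have h := mbil_comb l u 0 (u l)⁻¹ 0
    have huu : mbil l u u = 0 := hline0 t₀
    simpa [huu] using h
  · intro t
    have hpar := null_parallel l u (φ (a + t • p) - φ a) (hline0 t₀) (hline0 t)
      (by rw [hu, sub_sub_sub_cancel_right]; exact hline t₀ t)
    refine ⟨(φ (a + t • p) - φ a) l, ?_⟩
    rw [smul_comm, ← hpar, smul_smul, inv_mul_cancel₀ hul, one_smul, add_sub_cancel]
  · rintro p' ⟨⟨hp'l, -⟩, hp'⟩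
    obtain ⟨s, hs⟩ := hp' t₀
    have hus : u = s • p' := by rw [hu, hs, add_sub_cancel_left]
    -- elements of `QSet n` have last coordinate 1, so the last coordinate of `u` is the scalar
    have hs' : u l = s := by rw [hus]; simp [hp'l]
    rw [hs'] at hul ⊢
    rw [hus, smul_smul, inv_mul_cancel₀ hul, one_smul]
end
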